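/- arXiv:2010.01529 — 2 statements merged into one kernel-verified Lean document; each statement's English description precedes it below -/
import Mathlib

section
/- Let N ∈ ℕ and Y ⊂ ℝ^N be a Borel set. Suppose F : Y × ℝ³ → ℝ and D : Y × ℝ³ → ℝ³ are measurable with F ∈ L²_loc(Y × ℝ³), D ∈ L²_loc(Y × ℝ³, ℝ³), D(y,z)·z = 0 for a.e. (y,z), and ∫_{Y×ℝ³} Ψ(y,z)·D(y,z) dz dy = − ∫_{Y×ℝ³} F(y,z) · ∇_z·(Π(z)Ψ(y,z)) dz dy for every Ψ ∈ T_c(Y×ℝ³, ℝ³) (i.e., D is the weak projection gradient of F in z ≠ 0). Then F² has the weak projection gradient 2FD in z ≠ 0; that is, F² ∈ L¹_loc(Y×ℝ³), 2FD ∈ L¹_loc(Y×ℝ³, ℝ³), and ∫_{Y×ℝ³} Ψ(y,z)·(2F(y,z)D(y,z)) dz dy = − ∫_{Y×ℝ³} F(y,z)² · ∇_z·(Π(z)Ψ(y,z)) dz dy for every Ψ ∈ T_c(Y×ℝ³, ℝ³). -/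
/-!
The field `Π Ψ` is tangent to the spheres `|z| = const`, so the weak projection gradient only
involves derivatives along the rotation fields `z ↦ J z` with `J` skew. Rotations preserve Lebesgue
measure, hence the weak derivative along `J z` is the generator of a unitary group on `L²`. After
cutting off, skew-adjointness of this generator, applied to `φ F` and `χ F` with `χ = 1` on the
support of `φ`, is the product rule for `F²` along `J z`.

Summing over the generators `J` of the coordinate planes (as ordered pairs), the identity
`∑ J z ⊗ J z = 2 |z|² Π(z)` turns these product rules into the claim for the weighted test field
`|z|² Ψ`. Weights depending only on `|z|` commute with `∇_z · Π`, so replacing `Ψ` by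
`Ψ / (|z|² + ε)` and letting `ε → 0` removes the weight `|z|²`.
-/

open MeasureTheory
open scoped RealInnerProductSpace

noncomputable section

abbrev E3 := EuclideanSpace ℝ (Fin 3)

/-- The test class `T_c(Y × ℝ³, ℝ³)`: continuous compactly supported `Ψ` with `Ψ(y,0) = 0`,
`z ↦ Ψ(y,z)` of class `C¹` for each `y`, and uniformly bounded `z`-derivative. -/
def TestC (N : ℕ) (Ψ : EuclideanSpace ℝ (Fin N) × E3 → E3) : Prop :=
  Continuous Ψ ∧ HasCompactSupport Ψ ∧ (∀ y, Ψ (y, 0) = 0) ∧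
    (∀ y, ContDiff ℝ 1 fun z => Ψ (y, z)) ∧
    ∃ C : ℝ, ∀ y z, ‖fderiv ℝ (fun w => Ψ (y, w)) z‖ ≤ C

/-- The divergence `∇_z · (Π(z)Ψ(y,z)) = ∇_z·Ψ − nᵀ(∂_zΨ)n − 2(Ψ·n)/|z|` with `n = z/|z|`. -/
noncomputable def divPi (N : ℕ) (Ψ : EuclideanSpace ℝ (Fin N) × E3 → E3)
    (y : EuclideanSpace ℝ (Fin N)) (z : E3) : ℝ :=
  (∑ i : Fin 3, fderiv ℝ (fun w => Ψ (y, w)) z (EuclideanSpace.single i 1) i) -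
    ⟪‖z‖⁻¹ • z, fderiv ℝ (fun w => Ψ (y, w)) z (‖z‖⁻¹ • z)⟫ -
    2 * ⟪Ψ (y, z), ‖z‖⁻¹ • z⟫ / ‖z‖

open scoped ENNReal

section LocMemLp

variable {X V W G : Type*} [MeasurableSpace X] [NormedAddCommGroup V]
  [NormedAddCommGroup W] [NormedAddCommGroup G] {ν : Measure X} {f : X → V} {g : X → W}
  {p q r : ℝ≥0∞}

/-- The class `L^p_loc`, encoded by membership in `L^p` of every compact set. -/
def LocMemLp [TopologicalSpace X] (f : X → V) (p : ℝ≥0∞) (ν : Measure X) : Prop :=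
  ∀ ⦃K : Set X⦄, IsCompact K → MemLp f p (ν.restrict K)

theorem locMemLp_two_of_integrableOn [PseudoMetricSpace X]
    [OpensMeasurableSpace X] (x : X) {s : Set X} (hf : AEStronglyMeasurable f ν)
    (h : ∀ R : ℝ, 0 < R → IntegrableOn (fun x => ‖f x‖ ^ 2) (s ∩ Metric.closedBall x R) ν) :
    LocMemLp f 2 (ν.restrict s) := by
  intro K hK
  obtain ⟨R, hR, hKR⟩ := hK.isBounded.subset_closedBall_lt 0 x
  refine MemLp.mono_measure (Measure.restrict_mono hKR le_rfl) ?_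
  rw [memLp_two_iff_integrable_sq_norm hf.restrict.restrict,
    Measure.restrict_restrict Metric.isClosed_closedBall.measurableSet, Set.inter_comm]
  exact h R hR

theorem LocMemLp.integrableOn_norm [PseudoMetricSpace X] [ProperSpace X]
    [OpensMeasurableSpace X] {s : Set X} (hf : LocMemLp f 1 (ν.restrict s)) (x : X) (R : ℝ) :
    IntegrableOn (fun x => ‖f x‖) (s ∩ Metric.closedBall x R) ν := by
  have h := memLp_one_iff_integrable.1 (hf (isCompact_closedBall x R))
  rw [Measure.restrict_restrict Metric.isClosed_closedBall.measurableSet, Set.inter_comm] at h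
  exact h.norm

variable [TopologicalSpace X]

theorem locMemLp_top_of_continuous [OpensMeasurableSpace X] [T2Space X]
    [SecondCountableTopologyEither X V] (hf : Continuous f) : LocMemLp f ∞ ν := by
  intro K hK
  obtain ⟨C, hC⟩ := hK.exists_bound_of_continuousOn hf.continuousOn
  exact memLp_top_of_bound hf.aestronglyMeasurable C
    (ae_restrict_of_forall_mem hK.measurableSet hC)

theorem locMemLp_top_of_bound (hf : AEStronglyMeasurable f ν) {C : ℝ} (hC : ∀ x, ‖f x‖ ≤ C) :
    LocMemLp f ∞ ν :=
  fun _ _ => memLp_top_of_bound hf.restrict C (ae_of_all _ hC)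

theorem LocMemLp.mono_exponent [IsFiniteMeasureOnCompacts ν] (hf : LocMemLp f p ν) (hqp : q ≤ p) :
    LocMemLp f q ν := fun K hK =>
  have : IsFiniteMeasure (ν.restrict K) := ⟨by simpa using hK.measure_lt_top⟩
  (hf hK).mono_exponent hqp

theorem LocMemLp.bilin [NormedSpace ℝ V] [NormedSpace ℝ W] [NormedSpace ℝ G]
    [p.HolderTriple q r] (B : V →L[ℝ] W →L[ℝ] G) (hf : LocMemLp f p ν) (hg : LocMemLp g q ν) :
    LocMemLp (fun x => B (f x) (g x)) r ν := fun _ hK =>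
  MemLp.of_bilin (B · ·) ‖B‖₊ (hf hK) (hg hK)
    (B.aestronglyMeasurable_comp₂ (hf hK).1 (hg hK).1) (ae_of_all _ fun _ => B.le_opNorm₂ _ _)

theorem LocMemLp.mul {f g : X → ℝ} [p.HolderTriple q r] (hf : LocMemLp f p ν)
    (hg : LocMemLp g q ν) : LocMemLp (fun x => f x * g x) r ν :=
  hf.bilin (ContinuousLinearMap.mul ℝ ℝ) hg

theorem LocMemLp.sq {f : X → ℝ} [p.HolderTriple p r] (hf : LocMemLp f p ν) :
    LocMemLp (fun x => f x ^ 2) r ν := by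
  simpa only [pow_two] using hf.mul hf

theorem LocMemLp.inner [InnerProductSpace ℝ W] [p.HolderTriple q r] {f : X → W}
    (hf : LocMemLp f p ν) (hg : LocMemLp g q ν) : LocMemLp (fun x => ⟪f x, g x⟫) r ν :=
  hf.bilin (innerSL ℝ) hg

theorem LocMemLp.const_mul {f : X → ℝ} (hf : LocMemLp f p ν) (c : ℝ) :
    LocMemLp (fun x => c * f x) p ν :=
  fun _ hK => (hf hK).const_mul c

theorem LocMemLp.memLp_of_hasCompactSupport [OpensMeasurableSpace X]
    (hf : LocMemLp f p ν) (hs : HasCompactSupport f) : MemLp f p ν := by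
  rw [← Set.indicator_eq_self.2 (subset_tsupport f),
    memLp_indicator_iff_restrict (isClosed_tsupport f).measurableSet]
  exact hf hs.isCompact

theorem LocMemLp.locallyIntegrable [LocallyCompactSpace X] (hf : LocMemLp f 1 ν) :
    LocallyIntegrable f ν :=
  locallyIntegrable_iff.2 fun _ hK => memLp_one_iff_integrable.1 (hf hK)

theorem LocMemLp.integrable_of_hasCompactSupport [OpensMeasurableSpace X]
    (hf : LocMemLp f 1 ν) (hs : HasCompactSupport f) : Integrable f ν :=
  memLp_one_iff_integrable.1 (hf.memLp_of_hasCompactSupport hs)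

theorem LocMemLp.memLp_mul [OpensMeasurableSpace X] {f g : X → ℝ}
    (hf : LocMemLp f ∞ ν) (hs : HasCompactSupport f) (hg : LocMemLp g p ν) :
    MemLp (fun x => f x * g x) p ν :=
  (hf.mul hg).memLp_of_hasCompactSupport hs.mul_right

end LocMemLp

section UnitaryGroup

variable {H : Type*} [NormedAddCommGroup H] [InnerProductSpace ℝ H]

theorem inner_add_inner_eq_zero_of_hasDerivAt_isometry {U : ℝ → H →ₗᵢ[ℝ] H} (hU : ∀ x, U 0 x = x)
    {x x' y y' : H} (hx : HasDerivAt (fun t => U t x) x' 0)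
    (hy : HasDerivAt (fun t => U t y) y' 0) : ⟪x, y'⟫ + ⟪x', y⟫ = 0 := by
  have h := hx.inner ℝ hy
  simp only [hU, LinearIsometry.inner_map_map] at h
  exact h.unique (hasDerivAt_const 0 _)

variable [CompleteSpace H]

theorem hasDerivAt_of_dense_hasDerivAt_inner {S : Set H} (hS : Dense S) {u v : ℝ → H}
    (hv : Continuous v) (h : ∀ x ∈ S, ∀ t, HasDerivAt (fun s => ⟪x, u s⟫) ⟪x, v t⟫ t) (t : ℝ) :
    HasDerivAt u (v t) t := by
  have hprim : ∀ s, HasDerivAt (fun s => u 0 + ∫ r in (0 : ℝ)..s, v r) (v s) s := fun s =>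
    (hv.integral_hasStrictDerivAt 0 s).hasDerivAt.const_add (u 0)
  have hu : u = fun s => u 0 + ∫ r in (0 : ℝ)..s, v r := by
    refine funext fun s => hS.eq_of_inner_right ℝ fun x hx => ?_
    have hdiff (s : ℝ) :
        HasDerivAt (fun s => ⟪x, u s⟫ - ⟪x, u 0 + ∫ r in (0 : ℝ)..s, v r⟫) 0 s := by
      have h' := (h x hx s).sub ((hasDerivAt_const s x).inner ℝ (hprim s))
      rwa [inner_zero_left, add_zero, sub_self] at h'
    have hconst := is_const_of_deriv_eq_zero (fun s => (hdiff s).differentiableAt)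
      (fun s => (hdiff s).deriv) s 0
    simpa [sub_eq_zero] using hconst
  rw [hu]
  exact hprim t

/-- The one-parameter group `t ↦ exp (t J)` of isometries generated by a bounded skew operator. -/
def skewExp (J : skewAdjoint (H →L[ℝ] H)) (t : ℝ) : H ≃ₗᵢ[ℝ] H :=
  let _ : NormedAlgebra ℚ (H →L[ℝ] H) := NormedAlgebra.restrictScalars ℚ ℝ _
  Unitary.linearIsometryEquiv ⟨NormedSpace.exp (t • (J : H →L[ℝ] H)),
    NormedSpace.exp_mem_unitary_of_mem_skewAdjoint (skewAdjoint.smul_mem t J.2)⟩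

variable (J : skewAdjoint (H →L[ℝ] H)) (s t : ℝ) (z : H)

theorem skewExp_apply : skewExp J t z = NormedSpace.exp (t • (J : H →L[ℝ] H)) z := rfl

theorem skewExp_zero : skewExp J 0 z = z := by
  simp [skewExp_apply]

theorem skewExp_add : skewExp J (s + t) z = skewExp J s (skewExp J t z) := by
  let _ : NormedAlgebra ℚ (H →L[ℝ] H) := NormedAlgebra.restrictScalars ℚ ℝ _
  simp only [skewExp_apply, add_smul, NormedSpace.exp_add_of_commute
    (((Commute.refl (J : H →L[ℝ] H)).smul_left s).smul_right t), mul_apply_eq_comp]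

theorem skewExp_apply_generator :
    skewExp J t ((J : H →L[ℝ] H) z) = (J : H →L[ℝ] H) (skewExp J t z) := by
  let _ : NormedAlgebra ℚ (H →L[ℝ] H) := NormedAlgebra.restrictScalars ℚ ℝ _
  exact congrArg (fun A : H →L[ℝ] H => A z)
    ((Commute.refl (J : H →L[ℝ] H)).smul_left t).exp_left.eq

theorem hasDerivAt_skewExp :
    HasDerivAt (fun s => skewExp J s z) ((J : H →L[ℝ] H) (skewExp J t z)) t := by
  simpa [skewExp_apply] using
    (hasDerivAt_exp_smul_const' (𝕂 := ℝ) (J : H →L[ℝ] H) t).clm_apply (hasDerivAt_const t z)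

theorem continuous_skewExp : Continuous fun q : ℝ × H => skewExp J q.1 q.2 := by
  let _ : NormedAlgebra ℚ (H →L[ℝ] H) := NormedAlgebra.restrictScalars ℚ ℝ _
  have hexp : Continuous fun t : ℝ => NormedSpace.exp (t • (J : H →L[ℝ] H)) :=
    NormedSpace.exp_continuous.comp (by fun_prop)
  exact (hexp.comp continuous_fst).clm_apply continuous_snd

end UnitaryGroup

section TestFunctions

variable {P E V W G : Type*} [NormedAddCommGroup P] [NormedAddCommGroup E] [NormedSpace ℝ E]
  [NormedAddCommGroup V] [NormedSpace ℝ V] [NormedAddCommGroup W] [NormedSpace ℝ W]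
  [NormedAddCommGroup G] [NormedSpace ℝ G] {φ : P × E → V} {ψ : P × E → W}

/-- The partial derivative `∂_z φ(y, z)` of a function on `P × E`. -/
def fderivSnd (φ : P × E → V) (p : P × E) : E →L[ℝ] V :=
  fderiv ℝ (fun z => φ (p.1, z)) p.2

/-- The derivative of `φ(y, z)` along the linear vector field `z ↦ J z`. -/
def derivAlong (J : E →L[ℝ] E) (φ : P × E → V) (p : P × E) : V :=
  fderivSnd φ p (J p.2)

/-- The test functions of the weak formulations: continuous and compactly supported on `P × E`,
and `C¹` with bounded derivative in the second variable only. -/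
structure IsTestFun (φ : P × E → V) : Prop where
  continuous : Continuous φ
  hasCompactSupport : HasCompactSupport φ
  contDiff_snd : ∀ y, ContDiff ℝ 1 fun z => φ (y, z)
  exists_norm_fderivSnd_le : ∃ C : ℝ, ∀ p, ‖fderivSnd φ p‖ ≤ C

theorem fderivSnd_of_notMem_tsupport {p : P × E} (hp : p ∉ tsupport φ) : fderivSnd φ p = 0 := by
  have hev : (fun z => φ (p.1, z)) =ᶠ[nhds p.2] fun _ => 0 :=
    (Continuous.prodMk_right p.1).continuousAt.eventually (notMem_tsupport_iff_eventuallyEq.1 hp)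
  simp [fderivSnd, hev.fderiv_eq]

theorem hasCompactSupport_derivAlong (h : HasCompactSupport φ) (J : E →L[ℝ] E) :
    HasCompactSupport (derivAlong J φ) :=
  h.mono' fun p hp => by
    contrapose! hp
    simp [derivAlong, fderivSnd_of_notMem_tsupport hp]

theorem opNorm_comp_le_of_le {A : V →L[ℝ] W} {L : E →L[ℝ] V} {a l : ℝ} (hA : ‖A‖ ≤ a)
    (hL : ‖L‖ ≤ l) : ‖A.comp L‖ ≤ a * l :=
  (A.opNorm_comp_le L).trans (mul_le_mul hA hL (norm_nonneg L) ((norm_nonneg A).trans hA))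

theorem IsTestFun.hasFDerivAt_snd (h : IsTestFun φ) (p : P × E) :
    HasFDerivAt (fun z => φ (p.1, z)) (fderivSnd φ p) p.2 :=
  ((h.contDiff_snd p.1).differentiable one_ne_zero p.2).hasFDerivAt

theorem IsTestFun.fderivSnd_bilin (hφ : IsTestFun φ) (hψ : IsTestFun ψ) (B : V →L[ℝ] W →L[ℝ] G)
    (p : P × E) : fderivSnd (fun p => B (φ p) (ψ p)) p =
      (B (φ p)).comp (fderivSnd ψ p) + (B.flip (ψ p)).comp (fderivSnd φ p) :=
  (B.hasFDerivAt_of_bilinear (hφ.hasFDerivAt_snd p) (hψ.hasFDerivAt_snd p)).fderiv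

theorem IsTestFun.derivAlong_mul {φ ψ : P × E → ℝ} (hφ : IsTestFun φ) (hψ : IsTestFun ψ)
    (J : E →L[ℝ] E) (p : P × E) : derivAlong J (fun p => φ p * ψ p) p =
      φ p * derivAlong J ψ p + derivAlong J φ p * ψ p :=
  congrArg (fun L : E →L[ℝ] ℝ => L (J p.2))
    (hφ.fderivSnd_bilin hψ (ContinuousLinearMap.mul ℝ ℝ) p)

theorem IsTestFun.bilin (hφ : IsTestFun φ) (hψ : IsTestFun ψ) (B : V →L[ℝ] W →L[ℝ] G) :
    IsTestFun fun p => B (φ p) (ψ p) where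
  continuous := B.continuous₂.comp (hφ.continuous.prodMk hψ.continuous)
  hasCompactSupport := hφ.hasCompactSupport.mono fun p hp => by
    contrapose! hp
    simp_all
  contDiff_snd y :=
    B.isBoundedBilinearMap.contDiff.comp ((hφ.contDiff_snd y).prodMk (hψ.contDiff_snd y))
  exists_norm_fderivSnd_le := by
    obtain ⟨Cφ, hCφ⟩ := hφ.hasCompactSupport.exists_bound_of_continuous hφ.continuous
    obtain ⟨Cψ, hCψ⟩ := hψ.hasCompactSupport.exists_bound_of_continuous hψ.continuous
    obtain ⟨Cφ', hCφ'⟩ := hφ.exists_norm_fderivSnd_le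
    obtain ⟨Cψ', hCψ'⟩ := hψ.exists_norm_fderivSnd_le
    refine ⟨‖B‖ * Cφ * Cψ' + ‖B.flip‖ * Cψ * Cφ', fun p => ?_⟩
    rw [hφ.fderivSnd_bilin hψ]
    exact norm_add_le_of_le
      (opNorm_comp_le_of_le (B.le_of_opNorm_le_of_le le_rfl (hCφ p)) (hCψ' p))
      (opNorm_comp_le_of_le (B.flip.le_of_opNorm_le_of_le le_rfl (hCψ p)) (hCφ' p))

theorem IsTestFun.mul {φ ψ : P × E → ℝ} (hφ : IsTestFun φ) (hψ : IsTestFun ψ) :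
    IsTestFun fun p => φ p * ψ p :=
  hφ.bilin hψ (ContinuousLinearMap.mul ℝ ℝ)

theorem IsTestFun.exists_norm_derivAlong_le (h : IsTestFun φ) (J : E →L[ℝ] E) :
    ∃ C R : ℝ, ∀ p, ‖derivAlong J φ p‖ ≤ (Metric.closedBall 0 R).indicator (fun _ => C) p := by
  obtain ⟨C, hC⟩ := h.exists_norm_fderivSnd_le
  obtain ⟨R, -, hR⟩ :=
    (hasCompactSupport_derivAlong h.hasCompactSupport J).isBounded.subset_closedBall_lt 0 0
  refine ⟨C * (‖J‖ * R), R, fun p => ?_⟩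
  by_cases hp : p ∈ Metric.closedBall 0 R
  · rw [Set.indicator_of_mem hp]
    exact (fderivSnd φ p).le_of_opNorm_le_of_le (hC p) <|
      J.le_of_opNorm_le_of_le le_rfl ((norm_snd_le p).trans (mem_closedBall_zero_iff.1 hp))
  · rw [Set.indicator_of_notMem hp, image_eq_zero_of_notMem_tsupport fun h => hp (hR h), norm_zero]

theorem isTestFun_of_contDiff [NormedSpace ℝ P] (h : ContDiff ℝ 1 φ) (hs : HasCompactSupport φ) :
    IsTestFun φ where
  continuous := h.continuous
  hasCompactSupport := hs
  contDiff_snd y := h.comp (contDiff_prodMk_right y)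
  exists_norm_fderivSnd_le := by
    obtain ⟨C, hC⟩ := (hs.fderiv ℝ).exists_bound_of_continuous (h.continuous_fderiv one_ne_zero)
    refine ⟨C * ‖ContinuousLinearMap.inr ℝ P E‖, fun p => ?_⟩
    have hφ : HasFDerivAt (fun z => φ (p.1, z)) _ p.2 :=
      ((h.differentiable one_ne_zero p).hasFDerivAt).comp p.2 (hasFDerivAt_prodMk_right p.1 p.2)
    rw [fderivSnd, hφ.fderiv]
    exact opNorm_comp_le_of_le (hC p) le_rfl

variable [FiniteDimensional ℝ E]

section Measurability

variable [FiniteDimensional ℝ V] [MeasurableSpace P] [BorelSpace P] [MeasurableSpace E]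
  [BorelSpace E] {ν : Measure (P × E)}

theorem IsTestFun.locMemLp_top_fderivSnd (h : IsTestFun φ) : LocMemLp (fderivSnd φ) ∞ ν := by
  obtain ⟨C, hC⟩ := h.exists_norm_fderivSnd_le
  have : CompleteSpace V := FiniteDimensional.complete ℝ V
  exact locMemLp_top_of_bound (measurable_fderiv_with_param ℝ
    (f := fun y z => φ (y, z)) h.continuous).aestronglyMeasurable hC

theorem IsTestFun.locMemLp_top_derivAlong (h : IsTestFun φ) (J : E →L[ℝ] E) :
    LocMemLp (derivAlong J φ) ∞ ν :=
  h.locMemLp_top_fderivSnd.bilin (ContinuousLinearMap.id ℝ (E →L[ℝ] V))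
    (locMemLp_top_of_continuous (by fun_prop))

end Measurability

variable [NormedSpace ℝ P] [FiniteDimensional ℝ P]

theorem exists_contDiff_hasCompactSupport_eq_one {K : Set (P × E)} (hK : IsCompact K) :
    ∃ χ : P × E → ℝ, ContDiff ℝ 1 χ ∧ HasCompactSupport χ ∧ ∀ p ∈ K, χ p = 1 := by
  obtain ⟨R, hR, hKR⟩ := hK.isBounded.subset_closedBall_lt 0 0
  let b : ContDiffBump (0 : P × E) := ⟨R, R + 1, hR, lt_add_one R⟩
  exact ⟨b, b.contDiff, b.hasCompactSupport, fun p hp => b.one_of_mem_closedBall (hKR hp)⟩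

theorem IsTestFun.bilin_contDiff (hφ : IsTestFun φ) (hψ : ContDiff ℝ 1 ψ)
    (B : V →L[ℝ] W →L[ℝ] G) : IsTestFun fun p => B (φ p) (ψ p) := by
  obtain ⟨χ, hχ, hχc, hχ1⟩ := exists_contDiff_hasCompactSupport_eq_one hφ.hasCompactSupport
  have hcut : (fun p => B (φ p) (ψ p)) = fun p => B (φ p) (χ p • ψ p) := by
    ext p
    by_cases hp : p ∈ tsupport φ
    · rw [hχ1 p hp, one_smul]
    · simp [image_eq_zero_of_notMem_tsupport hp]
  rw [hcut]
  exact hφ.bilin (isTestFun_of_contDiff (hχ.smul hψ) hχc.smul_right) B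

end TestFunctions

section Rotation

variable {P E : Type*} [NormedAddCommGroup P] [NormedAddCommGroup E] [InnerProductSpace ℝ E]
  [FiniteDimensional ℝ E] (J : skewAdjoint (E →L[ℝ] E)) {φ : P × E → ℝ}

/-- The flow on `P × E` of the vector field `(y, z) ↦ (0, J z)`, which rotates the second
variable. -/
def rotSnd (J : skewAdjoint (E →L[ℝ] E)) (t : ℝ) : P × E ≃ₜ P × E :=
  (Homeomorph.refl P).prodCongr (skewExp J t).toHomeomorph

theorem rotSnd_apply (t : ℝ) (p : P × E) : rotSnd J t p = (p.1, skewExp J t p.2) := rfl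

theorem rotSnd_zero (p : P × E) : rotSnd J 0 p = p := by
  simp [rotSnd_apply, skewExp_zero]

theorem rotSnd_neg_rotSnd (t : ℝ) (p : P × E) : rotSnd J (-t) (rotSnd J t p) = p := by
  simp [rotSnd_apply, ← skewExp_add, skewExp_zero]

theorem norm_rotSnd (t : ℝ) (p : P × E) : ‖rotSnd J t p‖ = ‖p‖ := by
  simp [rotSnd_apply, Prod.norm_def]

theorem continuous_rotSnd : Continuous fun q : ℝ × (P × E) => rotSnd J q.1 q.2 := by
  have := (continuous_skewExp J).comp (f := fun q : ℝ × (P × E) => (q.1, q.2.2)) (by fun_prop)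
  simp only [rotSnd_apply]
  exact (by fun_prop : Continuous fun q : ℝ × (P × E) => q.2.1).prodMk this

theorem fderivSnd_comp_rotSnd (φ : P × E → ℝ) (t : ℝ) (p : P × E) :
    fderivSnd (φ ∘ rotSnd J t) p = (fderivSnd φ (rotSnd J t p)).comp
      (skewExp J t : E →L[ℝ] E) :=
  (skewExp J t).toContinuousLinearEquiv.comp_right_fderiv (f := fun z => φ (p.1, z))

theorem derivAlong_comp_rotSnd (φ : P × E → ℝ) (t : ℝ) (p : P × E) :
    derivAlong J.1 (φ ∘ rotSnd J t) p = derivAlong J.1 φ (rotSnd J t p) := by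
  rw [derivAlong, fderivSnd_comp_rotSnd]
  exact congrArg _ (skewExp_apply_generator J t p.2)

theorem IsTestFun.comp_rotSnd (h : IsTestFun φ) (t : ℝ) : IsTestFun (φ ∘ rotSnd J t) where
  continuous := h.continuous.comp (rotSnd J t).continuous
  hasCompactSupport := h.hasCompactSupport.comp_homeomorph (rotSnd J t)
  contDiff_snd y := (h.contDiff_snd y).comp (skewExp J t).contDiff
  exists_norm_fderivSnd_le := h.exists_norm_fderivSnd_le.imp fun C hC p => by
    rw [fderivSnd_comp_rotSnd]
    exact ((fderivSnd φ _).opNorm_comp_linearIsometryEquiv (skewExp J t)).trans_le (hC _)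

theorem IsTestFun.hasDerivAt_rotSnd (h : IsTestFun φ) (t : ℝ) (p : P × E) :
    HasDerivAt (fun s => φ (rotSnd J s p)) (derivAlong J.1 φ (rotSnd J t p)) t :=
  HasFDerivAt.comp_hasDerivAt (l := fun z => φ (p.1, z)) t (h.hasFDerivAt_snd (rotSnd J t p))
    (hasDerivAt_skewExp J t p.2)

variable [MeasurableSpace P] [MeasurableSpace E] [BorelSpace E]

theorem measurePreserving_rotSnd (μ : Measure P) [SFinite μ] (t : ℝ) :
    MeasurePreserving (rotSnd J t) (μ.prod volume) (μ.prod volume) :=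
  (MeasurePreserving.id μ).prod (skewExp J t).measurePreserving

variable [BorelSpace P] {ν : Measure (P × E)} {f : P × E → ℝ}

theorem IsTestFun.memLp_mul (h : IsTestFun φ) {q : ℝ≥0∞} (hf : LocMemLp f q ν) :
    MemLp (fun p => φ p * f p) q ν :=
  (locMemLp_top_of_continuous h.continuous).memLp_mul h.hasCompactSupport hf

theorem IsTestFun.integrable_mul (h : IsTestFun φ) (hf : LocMemLp f 1 ν) :
    Integrable (fun p => φ p * f p) ν :=
  memLp_one_iff_integrable.1 (h.memLp_mul hf)

theorem IsTestFun.memLp_derivAlong_mul (h : IsTestFun φ) (J : E →L[ℝ] E) {q : ℝ≥0∞}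
    (hf : LocMemLp f q ν) : MemLp (fun p => derivAlong J φ p * f p) q ν :=
  (h.locMemLp_top_derivAlong J).memLp_mul (hasCompactSupport_derivAlong h.hasCompactSupport J) hf

theorem IsTestFun.integrable_derivAlong_mul (h : IsTestFun φ) (J : E →L[ℝ] E)
    (hf : LocMemLp f 1 ν) : Integrable (fun p => derivAlong J φ p * f p) ν :=
  memLp_one_iff_integrable.1 (h.memLp_derivAlong_mul J hf)

theorem IsTestFun.hasDerivAt_integral_rotSnd [ProperSpace P] (h : IsTestFun φ)
    (hf : LocMemLp f 1 ν) (t : ℝ) :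
    HasDerivAt (fun s => ∫ p, φ (rotSnd J s p) * f p ∂ν)
      (∫ p, derivAlong J.1 φ (rotSnd J t p) * f p ∂ν) t := by
  obtain ⟨C, R, hCR⟩ := h.exists_norm_derivAlong_le J.1
  have hbound (s : ℝ) (p : P × E) : ‖derivAlong J.1 φ (rotSnd J s p) * f p‖ ≤
      (Metric.closedBall 0 R).indicator (fun p => C * ‖f p‖) p := by
    have hmem : rotSnd J s p ∈ Metric.closedBall 0 R ↔ p ∈ Metric.closedBall 0 R := by
      simp only [mem_closedBall_zero_iff, norm_rotSnd]
    rw [norm_mul, Set.indicator_mul_left]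
    gcongr
    exact (hCR (rotSnd J s p)).trans_eq (Set.indicator_eq_indicator hmem rfl)
  have hball : Integrable f (ν.restrict (Metric.closedBall 0 R)) :=
    memLp_one_iff_integrable.1 (hf (isCompact_closedBall 0 R))
  have hmeas := ((h.comp_rotSnd J t).integrable_derivAlong_mul J.1 hf).1
  simp only [derivAlong_comp_rotSnd] at hmeas
  exact (hasDerivAt_integral_of_dominated_loc_of_deriv_le Filter.univ_mem
    (.of_forall fun s => ((h.comp_rotSnd J s).integrable_mul hf).1)
    ((h.comp_rotSnd J t).integrable_mul hf) hmeas
    (ae_of_all _ fun p s _ => hbound s p)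
    ((integrable_indicator_iff Metric.isClosed_closedBall.measurableSet).2
      (hball.norm.const_mul C))
    (ae_of_all _ fun p s _ => (h.hasDerivAt_rotSnd J s p).mul_const (f p))).2

end Rotation

section Koopman

variable {P E : Type*} [NormedAddCommGroup P] [MeasurableSpace P] [NormedAddCommGroup E]
  [InnerProductSpace ℝ E] [FiniteDimensional ℝ E] [MeasurableSpace E] [BorelSpace E]
  {μ : Measure P} [SFinite μ] (J : skewAdjoint (E →L[ℝ] E)) (t : ℝ)

/-- The Koopman group of the rotations `rotSnd J`, a one-parameter unitary group on `L²` whose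
generator is the weak derivative along `J`. -/
def koopman (μ : Measure P) [SFinite μ] (J : skewAdjoint (E →L[ℝ] E)) (t : ℝ) :
    Lp ℝ 2 (μ.prod (volume : Measure E)) →ₗᵢ[ℝ] Lp ℝ 2 (μ.prod (volume : Measure E)) :=
  Lp.compMeasurePreservingₗᵢ ℝ (rotSnd J t) (measurePreserving_rotSnd J μ t)

theorem koopman_zero (x : Lp ℝ 2 (μ.prod (volume : Measure E))) : koopman μ J 0 x = x := by
  refine Lp.ext ((Lp.coeFn_compMeasurePreserving x (measurePreserving_rotSnd J μ 0)).trans ?_)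
  simp [Function.comp_def, rotSnd_zero]

theorem inner_toLp {X : Type*} [MeasurableSpace X] {ν : Measure X} {f g : X → ℝ}
    (hf : MemLp f 2 ν) (hg : MemLp g 2 ν) : ⟪hf.toLp f, hg.toLp g⟫ = ∫ x, f x * g x ∂ν := by
  rw [L2.inner_def]
  refine integral_congr_ae ?_
  filter_upwards [hf.coeFn_toLp, hg.coeFn_toLp] with x hfx hgx
  rw [hfx, hgx]
  exact mul_comm _ _

variable [BorelSpace P]

theorem integral_comp_rotSnd (f : P × E → ℝ) :
    ∫ p, f (rotSnd J t p) ∂μ.prod volume = ∫ p, f p ∂μ.prod volume :=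
  (measurePreserving_rotSnd J μ t).integral_comp (rotSnd J t).measurableEmbedding f

theorem inner_koopman_toLp {φ f : P × E → ℝ} (hφ : MemLp φ 2 (μ.prod volume))
    (hf : MemLp f 2 (μ.prod volume)) :
    ⟪hφ.toLp φ, koopman μ J t (hf.toLp f)⟫ = ∫ p, φ (rotSnd J (-t) p) * f p ∂μ.prod volume := by
  rw [← integral_comp_rotSnd J t]
  simp only [rotSnd_neg_rotSnd]
  exact inner_toLp hφ (hf.comp_measurePreserving (measurePreserving_rotSnd J μ t))

variable [NormedSpace ℝ P] [FiniteDimensional ℝ P] [IsLocallyFiniteMeasure μ]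

theorem continuous_koopman (x : Lp ℝ 2 (μ.prod (volume : Measure E))) :
    Continuous fun t => koopman μ J t x :=
  Continuous.compMeasurePreservingLp
    (g := fun t => (⟨rotSnd J t, (rotSnd J t).continuous⟩ : C(P × E, P × E)))
    (f := fun _ => x) continuous_const
    (ContinuousMap.continuous_of_continuous_uncurry _ (continuous_rotSnd J))
    (measurePreserving_rotSnd J μ) ENNReal.ofNat_ne_top

end Koopman

section WeakDerivative

variable {P E : Type*} [NormedAddCommGroup P] [MeasurableSpace P] [BorelSpace P]
  [NormedAddCommGroup E] [InnerProductSpace ℝ E] [FiniteDimensional ℝ E] [MeasurableSpace E]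
  [BorelSpace E] {μ : Measure P}

/-- `G` is the weak derivative of `F` along the linear vector field `z ↦ J z`. For skew `J` this
field is divergence free, so no zeroth-order term appears. -/
def HasWeakDerivAlong (μ : Measure P) (J : E →L[ℝ] E) (F G : P × E → ℝ) : Prop :=
  ∀ ⦃ψ : P × E → ℝ⦄, IsTestFun ψ →
    ∫ p, ψ p * G p ∂μ.prod volume = -∫ p, derivAlong J ψ p * F p ∂μ.prod volume

theorem HasWeakDerivAlong.test_mul {J : E →L[ℝ] E} {φ F G : P × E → ℝ}
    (h : HasWeakDerivAlong μ J F G) (hφ : IsTestFun φ) (hF : LocMemLp F 1 (μ.prod volume))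
    (hG : LocMemLp G 1 (μ.prod volume)) :
    HasWeakDerivAlong μ J (fun p => φ p * F p) (fun p => φ p * G p + derivAlong J φ p * F p) := by
  intro ψ hψ
  have hψφ := hψ.mul hφ
  have hφG := hψφ.integrable_mul hG
  have hXφF : Integrable (fun p => ψ p * (derivAlong J φ p * F p)) (μ.prod volume) :=
    hψ.integrable_mul ((hφ.locMemLp_top_derivAlong J).mul hF)
  calc ∫ p, ψ p * (φ p * G p + derivAlong J φ p * F p) ∂μ.prod volume
    _ = ∫ p, ψ p * φ p * G p ∂μ.prod volume +
          ∫ p, ψ p * (derivAlong J φ p * F p) ∂μ.prod volume := by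
        rw [← integral_add hφG hXφF]
        exact integral_congr_ae (ae_of_all _ fun p => by ring)
    _ = -∫ p, derivAlong J (fun p => ψ p * φ p) p * F p ∂μ.prod volume +
          ∫ p, ψ p * (derivAlong J φ p * F p) ∂μ.prod volume :=
        congrArg (· + _) (h hψφ)
    _ = -∫ p, derivAlong J ψ p * (φ p * F p) ∂μ.prod volume := by
        rw [neg_add_eq_sub, ← neg_sub,
          ← integral_sub (hψφ.integrable_derivAlong_mul J hF) hXφF]
        refine congrArg Neg.neg (integral_congr_ae (ae_of_all _ fun p => ?_))
        simp only [hψ.derivAlong_mul hφ]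
        ring

variable [NormedSpace ℝ P] [FiniteDimensional ℝ P] [IsLocallyFiniteMeasure μ] [SFinite μ]
  {J : skewAdjoint (E →L[ℝ] E)} {F G F' G' : P × E → ℝ}

theorem HasWeakDerivAlong.hasDerivAt_koopman (h : HasWeakDerivAlong μ J.1 F G)
    (hF : MemLp F 2 (μ.prod volume)) (hG : MemLp G 2 (μ.prod volume)) (t : ℝ) :
    HasDerivAt (fun s => koopman μ J s (hF.toLp F)) (koopman μ J t (hG.toLp G)) t := by
  refine hasDerivAt_of_dense_hasDerivAt_inner
    (Lp.dense_hasCompactSupport_contDiff (F := ℝ) (p := 2) (μ := μ.prod (volume : Measure E))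
      ENNReal.ofNat_ne_top) (continuous_koopman J _) ?_ t
  rintro x ⟨φ, hxφ, hs, hd⟩ t
  have hφ : IsTestFun φ := isTestFun_of_contDiff (hd.of_le (by simp)) hs
  have hφ2 : MemLp φ 2 (μ.prod volume) := hd.continuous.memLp_of_hasCompactSupport hs
  obtain rfl : x = hφ2.toLp φ := Lp.ext (hxφ.trans hφ2.coeFn_toLp.symm)
  have hFloc : LocMemLp F 2 (μ.prod volume) := fun _ _ => hF.restrict _
  have hderiv := (hφ.hasDerivAt_integral_rotSnd J (hFloc.mono_exponent one_le_two) (-t)).scomp t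
    (hasDerivAt_neg t)
  simp only [inner_koopman_toLp]
  refine hderiv.congr_deriv ?_
  rw [neg_one_smul]
  simpa only [derivAlong_comp_rotSnd, Function.comp_apply] using (h (hφ.comp_rotSnd J (-t))).symm

theorem HasWeakDerivAlong.integral_mul_add_mul_eq_zero (h : HasWeakDerivAlong μ J.1 F G)
    (h' : HasWeakDerivAlong μ J.1 F' G') (hF : MemLp F 2 (μ.prod volume))
    (hG : MemLp G 2 (μ.prod volume)) (hF' : MemLp F' 2 (μ.prod volume))
    (hG' : MemLp G' 2 (μ.prod volume)) :
    ∫ p, F p * G' p + G p * F' p ∂μ.prod volume = 0 := by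
  have hd := h.hasDerivAt_koopman hF hG 0
  have hd' := h'.hasDerivAt_koopman hF' hG' 0
  rw [koopman_zero] at hd hd'
  have hinner := inner_add_inner_eq_zero_of_hasDerivAt_isometry (koopman_zero J) hd hd'
  rw [inner_toLp, inner_toLp] at hinner
  exact (integral_add (hF.integrable_mul hG') (hG.integrable_mul hF')).trans hinner

theorem HasWeakDerivAlong.sq (h : HasWeakDerivAlong μ J.1 F G)
    (hF : LocMemLp F 2 (μ.prod volume)) (hG : LocMemLp G 2 (μ.prod volume)) :
    HasWeakDerivAlong μ J.1 (fun p => F p ^ 2) (fun p => 2 * F p * G p) := by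
  intro φ hφ
  obtain ⟨χ, hχc, hχs, hχ1⟩ := exists_contDiff_hasCompactSupport_eq_one hφ.hasCompactSupport
  have hχ := isTestFun_of_contDiff hχc hχs
  have hφχ : (fun p => φ p * χ p) = φ := by
    ext p
    by_cases hp : p ∈ tsupport φ
    · rw [hχ1 p hp, mul_one]
    · rw [image_eq_zero_of_notMem_tsupport hp, zero_mul]
  have hXφχ (p : P × E) :
      φ p * derivAlong J.1 χ p + derivAlong J.1 φ p * χ p = derivAlong J.1 φ p := by
    rw [← hφ.derivAlong_mul hχ, hφχ]
  have hmem {η : P × E → ℝ} (hη : IsTestFun η) := hη.memLp_mul hF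
  have hmem' {η : P × E → ℝ} (hη : IsTestFun η) :=
    (hη.memLp_mul hG).add (hη.memLp_derivAlong_mul J.1 hF)
  have hF1 := hF.mono_exponent one_le_two
  have hG1 := hG.mono_exponent one_le_two
  have hskew := (h.test_mul hφ hF1 hG1).integral_mul_add_mul_eq_zero
    (h.test_mul hχ hF1 hG1) (hmem hφ) (hmem' hφ) (hmem hχ) (hmem' hχ)
  have h2FG : LocMemLp (fun p => 2 * F p * G p) 1 (μ.prod volume) := (hF.const_mul 2).mul hG
  have hFF : LocMemLp (fun p => F p ^ 2) 1 (μ.prod volume) := hF.sq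
  rw [eq_neg_iff_add_eq_zero, ← integral_add (hφ.integrable_mul h2FG)
    (hφ.integrable_derivAlong_mul J.1 hFF), ← hskew]
  refine integral_congr_ae (ae_of_all _ fun p => ?_)
  linear_combination (-2 * F p * G p) * congrFun hφχ p - F p ^ 2 * hXφχ p

end WeakDerivative

section ProjDiv

variable {P E : Type*} [NormedAddCommGroup E] [InnerProductSpace ℝ E] {φ : P × E → ℝ}
  {Ψ : P × E → E} {p : P × E}

/-- The divergence `∇_z · (Π(z) Ψ(y, z))` in expanded form, with `n = z / |z|` and `d = dim E`:
`tr ∂_zΨ - ⟨n, (∂_zΨ) n⟩ - (d - 1) ⟨Ψ, n⟩ / |z|`. Its value at `z = 0` is a junk value. -/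
def projDiv (Ψ : P × E → E) (p : P × E) : ℝ :=
  LinearMap.trace ℝ E (fderivSnd Ψ p) -
    ⟪‖p.2‖⁻¹ • p.2, fderivSnd Ψ p (‖p.2‖⁻¹ • p.2)⟫ -
    (Module.finrank ℝ E - 1) * ⟪‖p.2‖⁻¹ • Ψ p, ‖p.2‖⁻¹ • p.2⟫

theorem norm_sq_mul_projDiv (Ψ : P × E → E) (p : P × E) :
    ‖p.2‖ ^ 2 * projDiv Ψ p = ‖p.2‖ ^ 2 * LinearMap.trace ℝ E (fderivSnd Ψ p) -
      ⟪p.2, fderivSnd Ψ p p.2⟫ - (Module.finrank ℝ E - 1) * ⟪Ψ p, p.2⟫ := by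
  rcases eq_or_ne p.2 0 with hz | hz
  · simp [hz]
  · have := norm_ne_zero_iff.2 hz
    simp only [projDiv, map_smul, real_inner_smul_left, real_inner_smul_right]
    field_simp

section SkewAdjoint

variable [CompleteSpace E] (J : skewAdjoint (E →L[ℝ] E))

theorem inner_skewAdjoint_apply (x z : E) : ⟪x, J.1 z⟫ = -⟪J.1 x, z⟫ := by
  rw [← ContinuousLinearMap.adjoint_inner_left, ← ContinuousLinearMap.star_eq_adjoint, J.2,
    neg_apply, inner_neg_left]

theorem inner_skewAdjoint_apply_self (z : E) : ⟪z, J.1 z⟫ = 0 := by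
  linarith [inner_skewAdjoint_apply J z z, real_inner_comm z (J.1 z)]

end SkewAdjoint

section Trace

variable [FiniteDimensional ℝ E]

theorem trace_skewAdjoint (J : skewAdjoint (E →L[ℝ] E)) : LinearMap.trace ℝ E J.1 = 0 := by
  rw [LinearMap.trace_eq_sum_inner _ (stdOrthonormalBasis ℝ E)]
  exact Finset.sum_eq_zero fun i _ => inner_skewAdjoint_apply_self J _

theorem projDiv_smul (hφ : DifferentiableAt ℝ (fun z => φ (p.1, z)) p.2)
    (hΨ : DifferentiableAt ℝ (fun z => Ψ (p.1, z)) p.2) :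
    projDiv (fun p => φ p • Ψ p) p = φ p * projDiv Ψ p +
      fderivSnd φ p (Ψ p - ⟪Ψ p, ‖p.2‖⁻¹ • p.2⟫ • ‖p.2‖⁻¹ • p.2) := by
  have hderiv : fderivSnd (fun p => φ p • Ψ p) p =
      φ p • fderivSnd Ψ p + (fderivSnd φ p).smulRight (Ψ p) :=
    (hφ.hasFDerivAt.smul hΨ.hasFDerivAt).fderiv
  have htrace : LinearMap.trace ℝ E ((fderivSnd φ p).smulRight (Ψ p) : E →L[ℝ] E) =
      fderivSnd φ p (Ψ p) :=
    LinearMap.trace_smulRight (fderivSnd φ p : E →ₗ[ℝ] ℝ) (Ψ p)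
  simp only [projDiv, hderiv, ContinuousLinearMap.toLinearMap_add,
    ContinuousLinearMap.toLinearMap_smul, map_add, map_smul, htrace, map_sub, add_apply,
    smul_apply, ContinuousLinearMap.smulRight_apply, inner_add_right, real_inner_smul_left,
    real_inner_smul_right, smul_eq_mul, real_inner_comm (Ψ p)]
  ring

theorem projDiv_smul_skewAdjoint (J : skewAdjoint (E →L[ℝ] E))
    (hφ : DifferentiableAt ℝ (fun z => φ (p.1, z)) p.2) :
    projDiv (fun p => φ p • J.1 p.2) p = derivAlong J.1 φ p := by
  have hderiv : fderivSnd (fun p : P × E => J.1 p.2) p = J.1 := J.1.fderiv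
  rw [projDiv_smul hφ J.1.differentiableAt]
  simp [projDiv, hderiv, trace_skewAdjoint, inner_skewAdjoint_apply_self, real_inner_smul_left,
    real_inner_smul_right, real_inner_comm p.2, derivAlong]

theorem projDiv_smul_id (hp : p.2 ≠ 0) (hφ : DifferentiableAt ℝ (fun z => φ (p.1, z)) p.2) :
    projDiv (fun p => φ p • p.2) p = 0 := by
  have hderiv : fderivSnd (fun p : P × E => p.2) p = ContinuousLinearMap.id ℝ E := fderiv_fun_id
  have hp' := norm_ne_zero_iff.2 hp
  rw [projDiv_smul hφ differentiableAt_fun_id]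
  have hn : ⟪p.2, ‖p.2‖⁻¹ • p.2⟫ • ‖p.2‖⁻¹ • p.2 = p.2 := by
    rw [real_inner_smul_right, real_inner_self_eq_norm_sq, smul_smul]
    field_simp
    exact one_smul ℝ p.2
  have hnn : ⟪‖p.2‖⁻¹ • p.2, ‖p.2‖⁻¹ • p.2⟫ = (1 : ℝ) := by
    rw [real_inner_self_eq_norm_sq, norm_smul, norm_inv, norm_norm, inv_mul_cancel₀ hp',
      one_pow]
  rw [hn, sub_self, map_zero, projDiv, hderiv, ContinuousLinearMap.coe_id, LinearMap.trace_id]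
  simp only [ContinuousLinearMap.id_apply, hnn]
  ring

theorem projDiv_radial_smul {w : ℝ → ℝ} (hw : DifferentiableAt ℝ w (‖p.2‖ ^ 2))
    (hΨ : DifferentiableAt ℝ (fun z => Ψ (p.1, z)) p.2) :
    projDiv (fun p => w (‖p.2‖ ^ 2) • Ψ p) p = w (‖p.2‖ ^ 2) * projDiv Ψ p := by
  have hderiv : HasFDerivAt (fun z : E => w (‖z‖ ^ 2)) _ p.2 :=
    hw.hasDerivAt.comp_hasFDerivAt p.2 (hasStrictFDerivAt_norm_sq p.2).hasFDerivAt
  rw [projDiv_smul (φ := fun p => w (‖p.2‖ ^ 2)) hderiv.differentiableAt hΨ, fderivSnd,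
    hderiv.fderiv]
  have hradial : ⟪p.2, Ψ p - ⟪Ψ p, ‖p.2‖⁻¹ • p.2⟫ • ‖p.2‖⁻¹ • p.2⟫ = (0 : ℝ) := by
    rcases eq_or_ne p.2 0 with hz | hz
    · simp [hz]
    · have := norm_ne_zero_iff.2 hz
      simp only [inner_sub_right, real_inner_smul_right, real_inner_self_eq_norm_sq,
        real_inner_comm p.2]
      field_simp
      ring
  simp [hradial]

end Trace

variable [NormedAddCommGroup P]

theorem hasCompactSupport_projDiv (h : HasCompactSupport Ψ) : HasCompactSupport (projDiv Ψ) :=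
  h.mono' fun p hp => by
    contrapose! hp
    simp [projDiv, fderivSnd_of_notMem_tsupport hp, image_eq_zero_of_notMem_tsupport hp]

/-- The test functions for weak projection gradients: vector fields vanishing at `z = 0`. -/
structure IsProjTestFun (Ψ : P × E → E) : Prop extends IsTestFun Ψ where
  apply_zero : ∀ y, Ψ (y, 0) = 0

theorem IsProjTestFun.exists_norm_le (h : IsProjTestFun Ψ) :
    ∃ C : ℝ, ∀ p, ‖Ψ p‖ ≤ C * ‖p.2‖ := by
  obtain ⟨C, hC⟩ := h.exists_norm_fderivSnd_le
  refine ⟨C, fun p => ?_⟩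
  simpa [h.apply_zero] using convex_univ.norm_image_sub_le_of_norm_fderiv_le
    (f := fun z => Ψ (p.1, z)) (fun z _ => (h.contDiff_snd p.1).differentiable one_ne_zero z)
    (fun z _ => hC (p.1, z)) (Set.mem_univ 0) (Set.mem_univ p.2)

variable [FiniteDimensional ℝ E]

theorem IsProjTestFun.locMemLp_top_projDiv [MeasurableSpace P] [BorelSpace P] [MeasurableSpace E]
    [BorelSpace E] (h : IsProjTestFun Ψ) {ν : Measure (P × E)} : LocMemLp (projDiv Ψ) ∞ ν := by
  obtain ⟨C, hC⟩ := h.exists_norm_le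
  have hA : LocMemLp (fderivSnd Ψ) ∞ ν := h.locMemLp_top_fderivSnd
  have hn : LocMemLp (fun p : P × E => ‖p.2‖⁻¹ • p.2) ∞ ν :=
    locMemLp_top_of_bound (C := 1) (by fun_prop) fun p => by
      rw [norm_smul, norm_inv, norm_norm]
      exact inv_mul_le_one
  have hΨ : LocMemLp (fun p : P × E => ‖p.2‖⁻¹ • Ψ p) ∞ ν :=
    locMemLp_top_of_bound (C := |C|)
      ((by fun_prop : Measurable fun p : P × E => ‖p.2‖⁻¹).aestronglyMeasurable.smul
        h.continuous.aestronglyMeasurable) fun p => by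
      rw [norm_smul, norm_inv, norm_norm]
      refine inv_mul_le_of_le_mul₀ (norm_nonneg _) (abs_nonneg C) ((hC p).trans ?_)
      rw [mul_comm]
      gcongr
      exact le_abs_self C
  have hAn : LocMemLp (fun p => fderivSnd Ψ p (‖p.2‖⁻¹ • p.2)) ∞ ν :=
    hA.bilin (ContinuousLinearMap.id ℝ (E →L[ℝ] E)) hn
  let tr : (E →L[ℝ] E) →L[ℝ] ℝ := LinearMap.toContinuousLinearMap
    (LinearMap.trace ℝ E ∘ₗ ContinuousLinearMap.coeLM ℝ)
  exact fun K hK => ((tr.comp_memLp' (hA hK)).sub ((hn.inner hAn) hK)).sub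
    (((hΨ.inner hn) hK).const_mul _)

theorem IsTestFun.isProjTestFun_smul [NormedSpace ℝ P] [FiniteDimensional ℝ P] (h : IsTestFun φ)
    (A : E →L[ℝ] E) : IsProjTestFun fun p => φ p • A p.2 where
  toIsTestFun := h.bilin_contDiff (by fun_prop) (ContinuousLinearMap.lsmul ℝ ℝ)
  apply_zero _ := by simp

theorem IsProjTestFun.contDiff_smul [NormedSpace ℝ P] [FiniteDimensional ℝ P]
    (h : IsProjTestFun Ψ) {w : P × E → ℝ} (hw : ContDiff ℝ 1 w) :
    IsProjTestFun fun p => w p • Ψ p where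
  toIsTestFun := h.bilin_contDiff hw (ContinuousLinearMap.lsmul ℝ ℝ).flip
  apply_zero y := by simp [h.apply_zero]

end ProjDiv

section RotationGenerators

variable {P E : Type*} [NormedAddCommGroup E] [InnerProductSpace ℝ E]

section Generator

variable [CompleteSpace E]

/-- The generator `x ↦ ⟨u, x⟩ v - ⟨v, x⟩ u` of the rotations in the plane spanned by `u`, `v`. -/
def rotGen (u v : E) : skewAdjoint (E →L[ℝ] E) :=
  ⟨InnerProductSpace.rankOne ℝ v u - InnerProductSpace.rankOne ℝ u v, by
    simp [skewAdjoint.mem_iff, ContinuousLinearMap.star_eq_adjoint]⟩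

theorem rotGen_apply (u v x : E) : (rotGen u v).1 x = ⟪u, x⟫ • v - ⟪v, x⟫ • u := rfl

end Generator

variable [FiniteDimensional ℝ E] {ι : Type*} [Fintype ι] (b : OrthonormalBasis ι ℝ E)

theorem sum_rankOne_rotGen (x w : E) :
    ∑ k : ι × ι, InnerProductSpace.rankOne ℝ ((rotGen (b k.1) (b k.2)).1 x)
        ((rotGen (b k.1) (b k.2)).1 w) =
      (2 : ℝ) • (⟪x, w⟫ • ContinuousLinearMap.id ℝ E - InnerProductSpace.rankOne ℝ w x) := by
  have hinner (x y : E) : ∑ i, ⟪b i, x⟫ * ⟪b i, y⟫ = ⟪x, y⟫ := by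
    simpa only [real_inner_comm] using b.sum_inner_mul_inner x y
  ext v
  refine ext_inner_right ℝ fun u => ?_
  calc ⟪(∑ k : ι × ι, InnerProductSpace.rankOne ℝ ((rotGen (b k.1) (b k.2)).1 x)
        ((rotGen (b k.1) (b k.2)).1 w)) v, u⟫
    _ = ∑ i, ∑ j, (⟪b i, x⟫ * ⟪b i, w⟫ * (⟪b j, v⟫ * ⟪b j, u⟫) +
          ⟪b i, v⟫ * ⟪b i, u⟫ * (⟪b j, x⟫ * ⟪b j, w⟫) -
          ⟪b i, x⟫ * ⟪b i, v⟫ * (⟪b j, w⟫ * ⟪b j, u⟫) -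
          ⟪b i, w⟫ * ⟪b i, u⟫ * (⟪b j, x⟫ * ⟪b j, v⟫)) := by
      rw [sum_apply, sum_inner, Fintype.sum_prod_type]
      refine Finset.sum_congr rfl fun i _ => Finset.sum_congr rfl fun j _ => ?_
      simp only [InnerProductSpace.rankOne_apply, rotGen_apply, inner_sub_left,
        real_inner_smul_left]
      ring
    _ = 2 * (⟪x, w⟫ * ⟪v, u⟫ - ⟪x, v⟫ * ⟪w, u⟫) := by
      simp only [Finset.sum_add_distrib, Finset.sum_sub_distrib, ← Finset.mul_sum,
        ← Finset.sum_mul, hinner]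
      ring
    _ = _ := by
      simp [inner_sub_left, real_inner_smul_left]

theorem sum_inner_map_rotGen (A : E →L[ℝ] E) (x w : E) :
    ∑ k : ι × ι, ⟪(rotGen (b k.1) (b k.2)).1 w, A ((rotGen (b k.1) (b k.2)).1 x)⟫ =
      2 * (⟪x, w⟫ * LinearMap.trace ℝ E A - ⟪x, A w⟫) := by
  have htrace (x y : E) : LinearMap.trace ℝ E (A.comp (InnerProductSpace.rankOne ℝ x y)) =
      ⟪y, A x⟫ := by
    rw [InnerProductSpace.comp_rankOne, InnerProductSpace.trace_rankOne]
  have h := congrArg (fun T : E →L[ℝ] E => LinearMap.trace ℝ E (A.comp T))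
    (sum_rankOne_rotGen b x w)
  simpa only [ContinuousLinearMap.comp_finsetSum, ContinuousLinearMap.comp_smul,
    ContinuousLinearMap.comp_sub, ContinuousLinearMap.comp_id,
    ContinuousLinearMap.toLinearMap_sum, ContinuousLinearMap.toLinearMap_smul,
    ContinuousLinearMap.toLinearMap_sub, map_sum, map_smul, map_sub, htrace, smul_eq_mul]
    using h

theorem sum_inner_mul_inner_rotGen (u v z : E) :
    ∑ k : ι × ι, ⟪u, (rotGen (b k.1) (b k.2)).1 z⟫ * ⟪(rotGen (b k.1) (b k.2)).1 z, v⟫ =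
      2 * (‖z‖ ^ 2 * ⟪u, v⟫ - ⟪u, z⟫ * ⟪z, v⟫) := by
  have h := congrArg (fun T : E →L[ℝ] E => ⟪u, T v⟫) (sum_rankOne_rotGen b z z)
  simpa [inner_sum, inner_sub_right, real_inner_smul_right, mul_comm] using h

theorem sum_inner_rotGen_rotGen (u z : E) :
    ∑ k : ι × ι, ⟪u, (rotGen (b k.1) (b k.2)).1 ((rotGen (b k.1) (b k.2)).1 z)⟫ =
      -(2 * (Module.finrank ℝ E - 1) * ⟪u, z⟫) := by
  have h := sum_inner_map_rotGen b (ContinuousLinearMap.id ℝ E) z u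
  simp only [ContinuousLinearMap.id_apply, ContinuousLinearMap.coe_id, LinearMap.trace_id] at h
  rw [Finset.sum_congr rfl fun k _ => inner_skewAdjoint_apply _ u _, Finset.sum_neg_distrib, h,
    real_inner_comm]
  ring

end RotationGenerators

section Weight

theorem tendsto_integral_div_add_mul {X : Type*} [MeasurableSpace X] {ν : Measure X}
    {r f : X → ℝ} (hr : AEMeasurable r ν) (hpos : ∀ᵐ x ∂ν, 0 < r x) (hf : Integrable f ν) :
    Filter.Tendsto (fun ε => ∫ x, r x / (r x + ε) * f x ∂ν) (nhdsWithin 0 (Set.Ioi 0))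
      (nhds (∫ x, f x ∂ν)) := by
  refine tendsto_integral_filter_of_dominated_convergence (fun x => ‖f x‖) ?_ ?_ hf.norm ?_
  · exact .of_forall fun ε => (hr.div (hr.add_const ε)).aestronglyMeasurable.mul hf.1
  · filter_upwards [self_mem_nhdsWithin] with ε (hε : 0 < ε)
    filter_upwards [hpos] with x hx
    rw [norm_mul, Real.norm_of_nonneg (by positivity)]
    exact mul_le_of_le_one_left (norm_nonneg _) (div_le_one_of_le₀ (by linarith) (by positivity))
  · filter_upwards [hpos] with x hx
    have : ContinuousAt (fun ε => r x / (r x + ε) * f x) 0 := by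
      fun_prop (disch := simpa using hx.ne')
    simpa [hx.ne'] using this.tendsto.mono_left nhdsWithin_le_nhds

theorem ae_snd_ne_zero {P E : Type*} [MeasurableSpace P] [NormedAddCommGroup E]
    [InnerProductSpace ℝ E] [FiniteDimensional ℝ E] [MeasurableSpace E] [BorelSpace E]
    [Nontrivial E] {μ : Measure P} : ∀ᵐ p : P × E ∂μ.prod volume, p.2 ≠ 0 :=
  Measure.quasiMeasurePreserving_snd.ae (Measure.ae_ne volume 0)

end Weight

section WeakProjGrad

variable {P E : Type*} [NormedAddCommGroup P] [NormedAddCommGroup E] [InnerProductSpace ℝ E]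
  {Ψ : P × E → E}

theorem IsTestFun.derivAlong_inner_clm (h : IsTestFun Ψ) (A : E →L[ℝ] E) (p : P × E) :
    derivAlong A (fun p => ⟪Ψ p, A p.2⟫) p =
      ⟪Ψ p, A (A p.2)⟫ + ⟪fderivSnd Ψ p (A p.2), A p.2⟫ := by
  have h := (h.hasFDerivAt_snd p).inner ℝ A.hasFDerivAt
  simp [derivAlong, fderivSnd, h.fderiv]

variable [FiniteDimensional ℝ E]

theorem IsTestFun.sum_derivAlong_inner_rotGen (h : IsTestFun Ψ) {ι : Type*} [Fintype ι]
    (b : OrthonormalBasis ι ℝ E) (p : P × E) :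
    ∑ k : ι × ι, derivAlong (rotGen (b k.1) (b k.2)).1
        (fun p => ⟪Ψ p, (rotGen (b k.1) (b k.2)).1 p.2⟫) p =
      2 * (‖p.2‖ ^ 2 * projDiv Ψ p) := by
  have hmap := sum_inner_map_rotGen b (fderivSnd Ψ p) p.2 p.2
  rw [real_inner_self_eq_norm_sq] at hmap
  simp only [h.derivAlong_inner_clm, Finset.sum_add_distrib, sum_inner_rotGen_rotGen,
    real_inner_comm _ (fderivSnd Ψ p _), hmap, norm_sq_mul_projDiv]
  ring

variable [NormedSpace ℝ P] [FiniteDimensional ℝ P]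

theorem IsTestFun.inner_clm (h : IsTestFun Ψ) (A : E →L[ℝ] E) :
    IsTestFun fun p => ⟪Ψ p, A p.2⟫ :=
  h.bilin_contDiff (by fun_prop) (innerSL ℝ)

variable [MeasurableSpace P] [MeasurableSpace E] [BorelSpace E] {μ : Measure P} {F : P × E → ℝ}
  {D : P × E → E}

/-- `D` is the weak projection gradient `Π ∇_z F` of `F` in `z ≠ 0`. -/
structure HasWeakProjGrad (μ : Measure P) (F : P × E → ℝ) (D : P × E → E) : Prop where
  locMemLp : LocMemLp F 1 (μ.prod volume)
  locMemLp_grad : LocMemLp D 1 (μ.prod volume)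
  integral_inner : ∀ ⦃Ψ : P × E → E⦄, IsProjTestFun Ψ →
    ∫ p, ⟪Ψ p, D p⟫ ∂μ.prod volume = -∫ p, projDiv Ψ p * F p ∂μ.prod volume

theorem HasWeakProjGrad.hasWeakDerivAlong (h : HasWeakProjGrad μ F D)
    (J : skewAdjoint (E →L[ℝ] E)) : HasWeakDerivAlong μ J.1 F fun p => ⟪J.1 p.2, D p⟫ := by
  intro ψ hψ
  have := h.integral_inner (hψ.isProjTestFun_smul J.1)
  simp only [real_inner_smul_left, projDiv_smul_skewAdjoint J
    (hψ.hasFDerivAt_snd _).differentiableAt] at this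
  exact this

variable [BorelSpace P]

theorem HasWeakProjGrad.inner_snd_ae_eq_zero [Nontrivial E] (h : HasWeakProjGrad μ F D) :
    ∀ᵐ p ∂μ.prod volume, ⟪p.2, D p⟫ = 0 := by
  have hloc : LocMemLp (fun p : P × E => ⟪p.2, D p⟫) 1 (μ.prod volume) :=
    (locMemLp_top_of_continuous continuous_snd).inner h.locMemLp_grad
  refine ae_eq_zero_of_integral_contDiff_smul_eq_zero hloc.locallyIntegrable fun φ hφ hφs => ?_
  have hφ' : IsTestFun φ := isTestFun_of_contDiff (hφ.of_le (by simp)) hφs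
  have hint := h.integral_inner (hφ'.isProjTestFun_smul (ContinuousLinearMap.id ℝ E))
  simp only [real_inner_smul_left, ContinuousLinearMap.id_apply] at hint
  refine hint.trans (neg_eq_zero.2 (integral_eq_zero_of_ae ?_))
  filter_upwards [ae_snd_ne_zero] with p hp
  rw [projDiv_smul_id hp (hφ'.hasFDerivAt_snd p).differentiableAt, zero_mul, Pi.zero_apply]

end WeakProjGrad

section Square

variable {P E : Type*} [NormedAddCommGroup P] [NormedSpace ℝ P] [FiniteDimensional ℝ P]
  [MeasurableSpace P] [BorelSpace P] [NormedAddCommGroup E] [InnerProductSpace ℝ E]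
  [FiniteDimensional ℝ E] [MeasurableSpace E] [BorelSpace E] [Nontrivial E] {μ : Measure P}
  [IsLocallyFiniteMeasure μ] [SFinite μ] {F : P × E → ℝ} {D : P × E → E} {Ψ : P × E → E}

theorem HasWeakProjGrad.integral_norm_sq_mul_inner (h : HasWeakProjGrad μ F D)
    (hF : LocMemLp F 2 (μ.prod volume)) (hD : LocMemLp D 2 (μ.prod volume))
    (hΨ : IsProjTestFun Ψ) :
    ∫ p, ‖p.2‖ ^ 2 * ⟪Ψ p, (2 * F p) • D p⟫ ∂μ.prod volume =
      -∫ p, ‖p.2‖ ^ 2 * (projDiv Ψ p * F p ^ 2) ∂μ.prod volume := by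
  let b := stdOrthonormalBasis ℝ E
  let J (k : Fin (Module.finrank ℝ E) × Fin (Module.finrank ℝ E)) := rotGen (b k.1) (b k.2)
  have hφ (k) : IsTestFun fun p => ⟪Ψ p, (J k).1 p.2⟫ := hΨ.inner_clm (J k).1
  have hG (k) : LocMemLp (fun p => ⟪(J k).1 p.2, D p⟫) 2 (μ.prod volume) :=
    (locMemLp_top_of_continuous (by fun_prop)).inner hD
  have hFG (k) : LocMemLp (fun p => 2 * F p * ⟪(J k).1 p.2, D p⟫) 1 (μ.prod volume) :=
    (hF.const_mul 2).mul (hG k)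
  have hF2 : LocMemLp (fun p => F p ^ 2) 1 (μ.prod volume) := hF.sq
  have hsum : ∑ k, ∫ p, ⟪Ψ p, (J k).1 p.2⟫ * (2 * F p * ⟪(J k).1 p.2, D p⟫) ∂μ.prod volume =
      -∑ k, ∫ p, derivAlong (J k).1 (fun p => ⟪Ψ p, (J k).1 p.2⟫) p * F p ^ 2 ∂μ.prod volume := by
    rw [← Finset.sum_neg_distrib]
    exact Finset.sum_congr rfl fun k _ => (h.hasWeakDerivAlong (J k)).sq hF (hG k) (hφ k)
  rw [← integral_finsetSum _ fun k _ => (hφ k).integrable_mul (hFG k),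
    ← integral_finsetSum _ fun k _ => (hφ k).integrable_derivAlong_mul (J k).1 hF2] at hsum
  have hleft : ∀ᵐ p ∂μ.prod volume,
      ∑ k, ⟪Ψ p, (J k).1 p.2⟫ * (2 * F p * ⟪(J k).1 p.2, D p⟫) =
        2 * (‖p.2‖ ^ 2 * ⟪Ψ p, (2 * F p) • D p⟫) := by
    filter_upwards [h.inner_snd_ae_eq_zero] with p hp
    calc ∑ k, ⟪Ψ p, (J k).1 p.2⟫ * (2 * F p * ⟪(J k).1 p.2, D p⟫)
      _ = 2 * F p * ∑ k, ⟪Ψ p, (J k).1 p.2⟫ * ⟪(J k).1 p.2, D p⟫ := by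
        rw [Finset.mul_sum]
        exact Finset.sum_congr rfl fun k _ => by ring
      _ = 2 * (‖p.2‖ ^ 2 * ⟪Ψ p, (2 * F p) • D p⟫) := by
        rw [sum_inner_mul_inner_rotGen b, hp, real_inner_smul_right]
        ring
  have hright (p : P × E) : ∑ k, derivAlong (J k).1 (fun p => ⟪Ψ p, (J k).1 p.2⟫) p * F p ^ 2 =
      2 * (‖p.2‖ ^ 2 * (projDiv Ψ p * F p ^ 2)) := by
    rw [← Finset.sum_mul, hΨ.sum_derivAlong_inner_rotGen b]
    ring
  rw [integral_congr_ae hleft, integral_congr_ae (.of_forall hright), integral_const_mul,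
    integral_const_mul] at hsum
  linarith

theorem HasWeakProjGrad.integral_div_mul_inner (h : HasWeakProjGrad μ F D)
    (hF : LocMemLp F 2 (μ.prod volume)) (hD : LocMemLp D 2 (μ.prod volume))
    (hΨ : IsProjTestFun Ψ) {ε : ℝ} (hε : 0 < ε) :
    ∫ p, ‖p.2‖ ^ 2 / (‖p.2‖ ^ 2 + ε) * ⟪Ψ p, (2 * F p) • D p⟫ ∂μ.prod volume =
      -∫ p, ‖p.2‖ ^ 2 / (‖p.2‖ ^ 2 + ε) * (projDiv Ψ p * F p ^ 2) ∂μ.prod volume := by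
  have hne (p : P × E) : ‖p.2‖ ^ 2 + ε ≠ 0 := by positivity
  have hw : ContDiff ℝ 1 fun p : P × E => (‖p.2‖ ^ 2 + ε)⁻¹ :=
    ((contDiff_snd.norm_sq ℝ).add contDiff_const).inv hne
  have hdiv (p : P × E) : projDiv (fun p => (‖p.2‖ ^ 2 + ε)⁻¹ • Ψ p) p =
      (‖p.2‖ ^ 2 + ε)⁻¹ * projDiv Ψ p :=
    projDiv_radial_smul (w := fun r => (r + ε)⁻¹) (by fun_prop (disch := exact hne p))
      (hΨ.hasFDerivAt_snd p).differentiableAt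
  have := h.integral_norm_sq_mul_inner hF hD (hΨ.contDiff_smul hw)
  simp only [hdiv, real_inner_smul_left] at this
  simpa only [div_eq_mul_inv, mul_assoc] using this

theorem stmt18_general (h : HasWeakProjGrad μ F D) (hF : LocMemLp F 2 (μ.prod volume))
    (hD : LocMemLp D 2 (μ.prod volume)) :
    HasWeakProjGrad μ (fun p => F p ^ 2) fun p => (2 * F p) • D p := by
  have hF2 : LocMemLp (fun p => F p ^ 2) 1 (μ.prod volume) := hF.sq
  have hFD : LocMemLp (fun p => (2 * F p) • D p) 1 (μ.prod volume) :=
    (hF.const_mul 2).bilin (ContinuousLinearMap.lsmul ℝ ℝ) hD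
  refine ⟨hF2, hFD, fun Ψ hΨ => ?_⟩
  have hr : AEMeasurable (fun p : P × E => ‖p.2‖ ^ 2) (μ.prod volume) := by fun_prop
  have hpos : ∀ᵐ p : P × E ∂μ.prod volume, 0 < ‖p.2‖ ^ 2 :=
    ae_snd_ne_zero.mono fun p hp => by positivity
  have hint : Integrable (fun p => ⟪Ψ p, (2 * F p) • D p⟫) (μ.prod volume) :=
    ((locMemLp_top_of_continuous hΨ.continuous).inner hFD).integrable_of_hasCompactSupport
      (hΨ.hasCompactSupport.mono fun p hp => by contrapose! hp; simp_all)
  have hint' : Integrable (fun p => projDiv Ψ p * F p ^ 2) (μ.prod volume) :=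
    memLp_one_iff_integrable.1 (hΨ.locMemLp_top_projDiv.memLp_mul
      (hasCompactSupport_projDiv hΨ.hasCompactSupport) hF2)
  refine tendsto_nhds_unique (tendsto_integral_div_add_mul hr hpos hint)
    ((tendsto_integral_div_add_mul hr hpos hint').neg.congr' ?_)
  filter_upwards [self_mem_nhdsWithin] with ε hε
  exact (h.integral_div_mul_inner hF hD hΨ hε).symm

end Square

section Concrete

variable {N : ℕ} {Ψ : EuclideanSpace ℝ (Fin N) × E3 → E3}

theorem testC_iff_isProjTestFun : TestC N Ψ ↔ IsProjTestFun Ψ where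
  mp := fun ⟨hc, hs, h0, hd, C, hC⟩ => ⟨⟨hc, hs, hd, C, fun p => hC p.1 p.2⟩, h0⟩
  mpr h := ⟨h.continuous, h.hasCompactSupport, h.apply_zero, h.contDiff_snd,
    h.exists_norm_fderivSnd_le.imp fun _ hC y z => hC (y, z)⟩

theorem divPi_eq_projDiv (p : EuclideanSpace ℝ (Fin N) × E3) :
    divPi N Ψ p.1 p.2 = projDiv Ψ p := by
  rw [divPi, projDiv, LinearMap.trace_eq_sum_inner _ (EuclideanSpace.basisFun (Fin 3) ℝ)]
  simp only [map_smul, real_inner_smul_left, EuclideanSpace.basisFun_apply, fderivSnd,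
    ContinuousLinearMap.coe_coe, EuclideanSpace.inner_single_left, Real.ringHom_apply, one_mul,
    finrank_euclideanSpace, Fintype.card_fin, Nat.cast_ofNat]
  ring

theorem volume_restrict_prod_univ (Y : Set (EuclideanSpace ℝ (Fin N))) :
    volume.restrict (Y ×ˢ (Set.univ : Set E3)) = (volume.restrict Y).prod volume := by
  rw [Measure.volume_eq_prod, ← Measure.prod_restrict, Measure.restrict_univ]

theorem hasWeakProjGrad_restrict_iff {Y : Set (EuclideanSpace ℝ (Fin N))}
    {F : EuclideanSpace ℝ (Fin N) × E3 → ℝ} {D : EuclideanSpace ℝ (Fin N) × E3 → E3} :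
    HasWeakProjGrad (volume.restrict Y) F D ↔
      LocMemLp F 1 (volume.restrict (Y ×ˢ Set.univ)) ∧
      LocMemLp D 1 (volume.restrict (Y ×ˢ Set.univ)) ∧
      ∀ Ψ, TestC N Ψ → ∫ p in Y ×ˢ (Set.univ : Set E3), ⟪Ψ p, D p⟫ =
        -∫ p in Y ×ˢ (Set.univ : Set E3), F p * divPi N Ψ p.1 p.2 := by
  simp only [volume_restrict_prod_univ, divPi_eq_projDiv, testC_iff_isProjTestFun, mul_comm (F _)]
  exact ⟨fun ⟨hF, hD, h⟩ => ⟨hF, hD, fun _ => @h _⟩, fun ⟨hF, hD, h⟩ => ⟨hF, hD, h⟩⟩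

end Concrete


/-- If `F ∈ L²_loc` has weak projection gradient `D ∈ L²_loc` in `z ≠ 0`,
then `F²` has weak projection gradient `2FD` in `z ≠ 0`. -/
theorem stmt18 (N : ℕ) (Y : Set (EuclideanSpace ℝ (Fin N))) (hY : MeasurableSet Y)
    (F : EuclideanSpace ℝ (Fin N) × E3 → ℝ) (D : EuclideanSpace ℝ (Fin N) × E3 → E3)
    (hFmeas : Measurable F) (hDmeas : Measurable D)
    (hFloc : ∀ R : ℝ, 0 < R →
      IntegrableOn (fun p => (F p) ^ 2) ((Y ×ˢ (Set.univ : Set E3)) ∩ Metric.closedBall 0 R)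
        volume)
    (hDloc : ∀ R : ℝ, 0 < R →
      IntegrableOn (fun p => ‖D p‖ ^ 2) ((Y ×ˢ (Set.univ : Set E3)) ∩ Metric.closedBall 0 R)
        volume)
    (hperp : ∀ᵐ p ∂(volume.restrict (Y ×ˢ (Set.univ : Set E3))), ⟪D p, p.2⟫ = 0)
    (hweak : ∀ Ψ, TestC N Ψ →
      (∫ p in Y ×ˢ (Set.univ : Set E3), ⟪Ψ p, D p⟫) =
        -∫ p in Y ×ˢ (Set.univ : Set E3), F p * divPi N Ψ p.1 p.2) :
    (∀ R : ℝ, 0 < R →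
      IntegrableOn (fun p => (F p) ^ 2) ((Y ×ˢ (Set.univ : Set E3)) ∩ Metric.closedBall 0 R)
        volume) ∧
    (∀ R : ℝ, 0 < R →
      IntegrableOn (fun p => ‖(2 * F p) • D p‖)
        ((Y ×ˢ (Set.univ : Set E3)) ∩ Metric.closedBall 0 R) volume) ∧
    ∀ Ψ, TestC N Ψ →
      (∫ p in Y ×ˢ (Set.univ : Set E3), ⟪Ψ p, (2 * F p) • D p⟫) =
        -∫ p in Y ×ˢ (Set.univ : Set E3), (F p) ^ 2 * divPi N Ψ p.1 p.2 := by
  have hF := locMemLp_two_of_integrableOn 0 hFmeas.aestronglyMeasurable (by simpa using hFloc)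
  have hD := locMemLp_two_of_integrableOn 0 hDmeas.aestronglyMeasurable hDloc
  have hgrad : HasWeakProjGrad (volume.restrict Y) F D := hasWeakProjGrad_restrict_iff.2
    ⟨hF.mono_exponent one_le_two, hD.mono_exponent one_le_two, hweak⟩
  rw [volume_restrict_prod_univ] at hF hD
  obtain ⟨-, hFD, hsq⟩ := hasWeakProjGrad_restrict_iff.1 (stmt18_general hgrad hF hD)
  exact ⟨hFloc, fun R _ => hFD.integrableOn_norm 0 R, hsq⟩

end
end

section
/- Let N ∈ ℕ and Y ⊂ ℝ^N be a Borel set. Suppose F : Y × ℝ³ → (0,∞) and D : Y × ℝ³ → ℝ³ are measurable with F ∈ L¹_loc(Y × ℝ³), D ∈ L¹_loc(Y × ℝ³, ℝ³), D(y,z)·z = 0 for a.e. (y,z), and ∫_{Y×ℝ³} Ψ(y,z)·D(y,z) dz dy = − ∫_{Y×ℝ³} F(y,z) · ∇_z·(Π(z)Ψ(y,z)) dz dy for every Ψ ∈ T_c(Y×ℝ³, ℝ³) (i.e., D is the weak projection gradient of F in z ≠ 0). Assume furthermore that inf { F(y,z) : y ∈ Y, |y| ≤ R₁, |z| ≤ R₂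 } > 0 for all 0 < R₁, R₂ < ∞, and that (y,z) ↦ F(y,z)/|z| belongs to L¹_loc(Y×ℝ³). Then √F has the weak projection gradient D/(2√F) in z ≠ 0; that is, ∫_{Y×ℝ³} Ψ(y,z) · ( D(y,z) / (2√(F(y,z))) ) dz dy = − ∫_{Y×ℝ³} √(F(y,z)) · ∇_z·(Π(z)Ψ(y,z)) dz dy for every Ψ ∈ T_c(Y×ℝ³, ℝ³). -/
/-!
For `z ≠ 0` the projected field `Π(z)Ψ` is a combination `½ ∑ᵢⱼ φᵢⱼ Jᵢⱼ z` of the infinitesimal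
rotations `Jᵢⱼ` in the coordinate planes, with coefficients `φᵢⱼ = Ψ · Jᵢⱼ z / |z|²`. The fields
`Jᵢⱼ z` are divergence-free and tangent to spheres, so `∇·(ΠΨ)` is the sum of the derivatives of
`½ φᵢⱼ` along `Jᵢⱼ z`, and `Ψ · D = ½ ∑ᵢⱼ φᵢⱼ (D · Jᵢⱼ z)` for tangential `D`.

Testing with `Ψ = φ J z` shows that `D · J z` is the weak derivative of `F` along the rotation flow
`exp(t J)`. The flow preserves the measure, so moving the test function along it and integrating in
time turns this into `F ∘ exp(t J) = F + ∫₀ᵗ (D · J z) ∘ exp(s J) ds` almost everywhere. Hence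
`F` is absolutely continuous on almost every orbit, where the classical chain and product rules
hold. The integral of a derivative along a measure-preserving flow vanishes, and this is the
integration by parts that leads back to the weak formulation.

Since `Ψ(y, 0) = 0` and `∂_z Ψ` is bounded, the `φᵢⱼ` are bounded with bounded derivative along the
flow, although discontinuous at `z = 0`, so no cutoff near `z = 0` is needed.
-/

open MeasureTheory
open scoped RealInnerProductSpace

noncomputable section

open Filter Set Topology
open scoped NNReal

section AbsolutelyContinuous

variable {f f' : ℝ → ℝ} {a b : ℝ}

theorem absolutelyContinuousOnInterval_comp_of_lipschitzOnWith {β : ℝ → ℝ} {K : ℝ≥0} {S : Set ℝ}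
    (hβ : LipschitzOnWith K β S) (hf : AbsolutelyContinuousOnInterval f a b)
    (hfS : MapsTo f (uIcc a b) S) : AbsolutelyContinuousOnInterval (β ∘ f) a b := by
  refine squeeze_zero' (.of_forall fun E => Finset.sum_nonneg fun _ _ => dist_nonneg) ?_
    (by simpa using Tendsto.const_mul (K : ℝ) hf)
  filter_upwards [mem_inf_of_right (mem_principal_self _)] with E hE
  rw [Finset.mul_sum]
  exact Finset.sum_le_sum fun i hi =>
    hβ.dist_le_mul _ (hfS (hE.1 i hi).1) _ (hfS (hE.1 i hi).2)

theorem integral_mul_eq_neg_of_absolutelyContinuousOnInterval {η η' : ℝ → ℝ}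
    (hf : AbsolutelyContinuousOnInterval f a b) (hη : AbsolutelyContinuousOnInterval η a b)
    (hf' : ∀ᵐ s, s ∈ uIcc a b → HasDerivAt f (f' s) s) (hη' : ∀ s, HasDerivAt η (η' s) s)
    (ha : η a = 0) (hb : η b = 0) :
    ∫ s in a..b, η s * f' s = -∫ s in a..b, η' s * f s := by
  have hparts := hη.integral_mul_deriv_eq_deriv_mul hf
  simp only [ha, hb, zero_mul, sub_zero, zero_sub, fun s => (hη' s).deriv] at hparts
  rw [← hparts]
  refine intervalIntegral.integral_congr_ae ?_
  filter_upwards [hf'] with s hs hmem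
  rw [(hs (uIoc_subset_uIcc hmem)).deriv]

theorem forall_mem_Icc_of_ae_mem {S : Set ℝ} (hS : IsClosed S) (hab : a < b)
    (hf : ContinuousOn f (Icc a b)) (hfS : ∀ᵐ s ∂volume.restrict (Icc a b), f s ∈ S) :
    MapsTo f (Icc a b) S := by
  have : NeBot (ae (volume.restrict (Icc a b))) := by
    rw [ae_neBot, Ne, Measure.restrict_eq_zero]
    simp [hab]
  obtain ⟨s₀, hs₀⟩ := hfS.exists
  have hdist : EqOn (fun s => Metric.infDist (f s) S) (fun _ => 0) (Icc a b) := by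
    refine Measure.eqOn_Icc_of_ae_eq volume hab.ne ?_
      ((Metric.continuous_infDist_pt S).comp_continuousOn hf) continuousOn_const
    filter_upwards [hfS] with s hs using Metric.infDist_zero_of_mem hs
  exact fun s hs => (hS.mem_iff_infDist_zero ⟨_, hs₀⟩).2 (hdist hs)

end AbsolutelyContinuous

section FlowDerivative

variable {X : Type*} [TopologicalSpace X] [MeasurableSpace X] {ϕ : Flow ℝ X} {ν : Measure X}
  {F G g k φ φ' : X → ℝ}

/-- `g` is the derivative of `F` along the flow `ϕ`, in the sense of absolute continuity on
`ν`-almost every orbit. For a `ϕ`-invariant measure the time window `[0, 1]` is no restriction. -/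
def HasFlowDeriv (ϕ : Flow ℝ X) (ν : Measure X) (F g : X → ℝ) : Prop :=
  ∀ᵐ p ∂ν, ∃ f : ℝ → ℝ, AbsolutelyContinuousOnInterval f 0 1 ∧
    ∀ᵐ s ∂volume.restrict (Icc 0 1), f s = F (ϕ s p) ∧ HasDerivAt f (g (ϕ s p)) s

theorem HasFlowDeriv.mul (hF : HasFlowDeriv ϕ ν F g) (hG : HasFlowDeriv ϕ ν G k) :
    HasFlowDeriv ϕ ν (F * G) (g * G + F * k) := by
  filter_upwards [hF, hG] with p ⟨f₁, hac₁, h₁⟩ ⟨f₂, hac₂, h₂⟩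
  refine ⟨f₁ * f₂, hac₁.mul hac₂, ?_⟩
  filter_upwards [h₁, h₂] with s ⟨hs₁, hd₁⟩ ⟨hs₂, hd₂⟩
  refine ⟨by simp [hs₁, hs₂], ?_⟩
  simpa only [Pi.add_apply, Pi.mul_apply, hs₁, hs₂] using hd₁.mul hd₂

theorem hasFlowDeriv_of_hasDerivAt {C : ℝ≥0}
    (hφ : ∀ p t, HasDerivAt (fun s => φ (ϕ s p)) (φ' (ϕ t p)) t) (hC : ∀ p, ‖φ' p‖₊ ≤ C) :
    HasFlowDeriv ϕ ν φ φ' := by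
  refine .of_forall fun p => ⟨fun s => φ (ϕ s p), ?_, .of_forall fun s => ⟨rfl, hφ p s⟩⟩
  exact ((lipschitzWith_of_nnnorm_deriv_le (fun s => (hφ p s).differentiableAt) fun s => by
    rw [(hφ p s).deriv]; exact hC _).lipschitzOnWith).absolutelyContinuousOnInterval

variable [BorelSpace X]

theorem measurable_flow (ϕ : Flow ℝ X) : Measurable fun q : ℝ × X => ϕ q.1 q.2 :=
  (ϕ.continuous continuous_fst continuous_snd).measurable

theorem measurable_flow_apply (ϕ : Flow ℝ X) (t : ℝ) : Measurable (ϕ t) :=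
  (ϕ.continuous_toFun t).measurable

theorem measurePreserving_flow_shear [SFinite ν] (μ : Measure ℝ) [SFinite μ]
    (hϕ : ∀ t, MeasurePreserving (ϕ t) ν ν) :
    MeasurePreserving (fun q : ℝ × X => (q.1, ϕ q.1 q.2)) (μ.prod ν) (μ.prod ν) :=
  (MeasurePreserving.id μ).skew_product (measurable_flow ϕ) (.of_forall fun t => (hϕ t).map_eq)

theorem integral_comp_flow (hϕ : ∀ t, MeasurePreserving (ϕ t) ν ν) (t : ℝ) (g : X → ℝ) :
    ∫ p, g (ϕ t p) ∂ν = ∫ p, g p ∂ν :=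
  (hϕ t).integral_comp (ϕ.toHomeomorph t).measurableEmbedding g

theorem ae_ae_comp_flow [SFinite ν] (μ : Measure ℝ) [SFinite μ]
    (hϕ : ∀ t, MeasurePreserving (ϕ t) ν ν) {P : X → Prop} (hP : ∀ᵐ p ∂ν, P p) :
    ∀ᵐ p ∂ν, ∀ᵐ s ∂μ, P (ϕ s p) := by
  have hprod : ∀ᵐ q ∂μ.prod ν, P (ϕ q.1 q.2) :=
    (measurePreserving_flow_shear μ hϕ).quasiMeasurePreserving.ae
      (Measure.quasiMeasurePreserving_snd.ae hP)
  exact Measure.ae_ae_of_ae_prod (Measure.measurePreserving_swap.quasiMeasurePreserving.ae hprod)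

theorem integrable_comp_flow_prod [SFinite ν] (hϕ : ∀ t, MeasurePreserving (ϕ t) ν ν)
    (hg : Integrable g ν) (a b : ℝ) :
    Integrable (fun q : ℝ × X => g (ϕ q.1 q.2)) ((volume.restrict (uIoc a b)).prod ν) := by
  have : IsFiniteMeasure (volume.restrict (uIoc a b)) := ⟨by simp [uIoc]⟩
  exact (measurePreserving_flow_shear _ hϕ).integrable_comp_of_integrable (hg.comp_snd _)

theorem integrable_intervalIntegral_comp_flow [SFinite ν]
    (hϕ : ∀ t, MeasurePreserving (ϕ t) ν ν) (hg : Integrable g ν) (a b : ℝ) :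
    Integrable (fun p => ∫ s in a..b, g (ϕ s p)) ν := by
  simp only [intervalIntegral.intervalIntegral_eq_integral_uIoc]
  exact (integrable_comp_flow_prod hϕ hg a b).integral_prod_right.smul (if a ≤ b then 1 else -1 : ℝ)

theorem HasFlowDeriv.comp [SFinite ν] {β β' : ℝ → ℝ} {S : Set ℝ} {K : ℝ≥0}
    (hϕ : ∀ t, MeasurePreserving (ϕ t) ν ν) (hF : HasFlowDeriv ϕ ν F g) (hS : IsClosed S)
    (hSc : Convex ℝ S) (hFS : ∀ᵐ p ∂ν, F p ∈ S) (hβ : ∀ x ∈ S, HasDerivAt β (β' x) x)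
    (hβK : ∀ x ∈ S, ‖β' x‖₊ ≤ K) : HasFlowDeriv ϕ ν (β ∘ F) fun p => β' (F p) * g p := by
  have hlip : LipschitzOnWith K β S :=
    hSc.lipschitzOnWith_of_nnnorm_hasDerivWithin_le (fun x hx => (hβ x hx).hasDerivWithinAt) hβK
  filter_upwards [hF, ae_ae_comp_flow (volume.restrict (Icc 0 1)) hϕ hFS] with p ⟨f, hac, hf⟩ hp
  have hfS : MapsTo f (Icc 0 1) S := by
    refine forall_mem_Icc_of_ae_mem hS one_pos (by simpa using hac.continuousOn) ?_
    filter_upwards [hf, hp] with s hs hmem using hs.1 ▸ hmem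
  refine ⟨β ∘ f, absolutelyContinuousOnInterval_comp_of_lipschitzOnWith hlip hac
    (by simpa using hfS), ?_⟩
  filter_upwards [hf, hp] with s ⟨hs, hd⟩ hmem
  refine ⟨congrArg β hs, ?_⟩
  have hβs := hβ _ hmem
  rw [← hs] at hβs
  simpa only [← hs] using hβs.comp s hd

theorem integral_intervalIntegral_mul_comp_flow [SFinite ν]
    (hϕ : ∀ t, MeasurePreserving (ϕ t) ν ν) (hg : Integrable g ν) {η : ℝ → ℝ}
    (hη : Continuous η) (a b : ℝ) :
    ∫ p, (∫ s in a..b, η s * g (ϕ s p)) ∂ν = (∫ s in a..b, η s) * ∫ p, g p ∂ν := by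
  obtain ⟨C, hC⟩ := (isCompact_uIcc (a := a) (b := b)).exists_bound_of_continuousOn hη.continuousOn
  have hint : Integrable (fun q : ℝ × X => η q.1 * g (ϕ q.1 q.2))
      ((volume.restrict (uIoc a b)).prod ν) := by
    refine (integrable_comp_flow_prod hϕ hg a b).bdd_mul
      (hη.measurable.comp measurable_fst).aestronglyMeasurable (c := C) ?_
    refine (Measure.quasiMeasurePreserving_fst (ν := ν)).ae (p := fun s => ‖η s‖ ≤ C) ?_
    filter_upwards [ae_restrict_mem measurableSet_uIoc] with s hs using hC s (uIoc_subset_uIcc hs)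
  rw [← intervalIntegral_integral_swap hint, ← intervalIntegral.integral_mul_const]
  simp only [integral_const_mul, integral_comp_flow hϕ]

-- Integrating by parts against `s (1 - s)` avoids any statement about `F` at a fixed time.
theorem HasFlowDeriv.integral_eq_zero [SFinite ν] (hϕ : ∀ t, MeasurePreserving (ϕ t) ν ν)
    (h : HasFlowDeriv ϕ ν F g) (hF : Integrable F ν) (hg : Integrable g ν) :
    ∫ p, g p ∂ν = 0 := by
  have hη' (s : ℝ) : HasDerivAt (fun s : ℝ => s * (1 - s)) (1 - 2 * s) s := by
    convert! (hasDerivAt_id s).mul ((hasDerivAt_id s).const_sub 1) using 1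
    simp; ring
  have hη : AbsolutelyContinuousOnInterval (fun s : ℝ => s * (1 - s)) 0 1 :=
    ContDiffOn.absolutelyContinuousOnInterval (ContDiff.contDiffOn (by fun_prop))
  have hparts : ∀ᵐ p ∂ν, ∫ s in (0 : ℝ)..1, s * (1 - s) * g (ϕ s p) =
      -∫ s in (0 : ℝ)..1, (1 - 2 * s) * F (ϕ s p) := by
    filter_upwards [h] with p ⟨f, hac, hf⟩
    rw [ae_restrict_iff' measurableSet_Icc, ← uIcc_of_le zero_le_one] at hf
    rw [integral_mul_eq_neg_of_absolutelyContinuousOnInterval hac hη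
      (hf.mono fun s hs hmem => (hs hmem).2) hη' (by norm_num) (by norm_num), neg_inj]
    refine intervalIntegral.integral_congr_ae ?_
    filter_upwards [hf] with s hs hmem
    rw [(hs (uIoc_subset_uIcc hmem)).1]
  have hintegral := integral_congr_ae hparts
  rw [integral_neg, integral_intervalIntegral_mul_comp_flow hϕ hg (by fun_prop),
    integral_intervalIntegral_mul_comp_flow hϕ hF (by fun_prop)] at hintegral
  have h₁ : ∫ s in (0 : ℝ)..1, s * (1 - s) = 1 / 6 := by
    simp only [mul_sub, mul_one, ← pow_two]
    rw [intervalIntegral.integral_sub (by simp) (by simp)]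
    norm_num
  have h₂ : ∫ s in (0 : ℝ)..1, (1 - 2 * s) = 0 := by
    rw [intervalIntegral.integral_sub (by simp)
      (Continuous.intervalIntegrable (by fun_prop) 0 1), intervalIntegral.integral_const_mul]
    norm_num
  rw [h₁, h₂] at hintegral
  linarith

theorem HasFlowDeriv.integral_mul_eq_neg [SFinite ν] (hϕ : ∀ t, MeasurePreserving (ϕ t) ν ν)
    (hF : HasFlowDeriv ϕ ν F g) (hφ : HasFlowDeriv ϕ ν φ φ') (hφF : Integrable (φ * F) ν)
    (hφg : Integrable (φ * g) ν) (hφ'F : Integrable (φ' * F) ν) :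
    ∫ p, φ p * g p ∂ν = -∫ p, φ' p * F p ∂ν := by
  have h := (hφ.mul hF).integral_eq_zero hϕ hφF (hφ'F.add hφg)
  rw [integral_add' hφ'F hφg] at h
  exact eq_neg_of_add_eq_zero_right h

theorem measurable_intervalIntegral_comp_flow (hg : Measurable g) :
    Measurable fun q : ℝ × X => ∫ s in (0 : ℝ)..q.1, g (ϕ s q.2) := by
  have hunit (q : ℝ × X) : ∫ s in (0 : ℝ)..q.1, g (ϕ s q.2) =
      q.1 * ∫ u in Ioc (0 : ℝ) 1, g (ϕ (q.1 * u) q.2) := by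
    rw [← intervalIntegral.integral_of_le zero_le_one,
      intervalIntegral.mul_integral_comp_mul_left (f := fun s => g (ϕ s q.2))]
    simp
  simp only [hunit]
  refine measurable_fst.mul (StronglyMeasurable.integral_prod_right ?_).measurable
  exact (hg.comp ((measurable_flow ϕ).comp (by fun_prop :
    Measurable fun r : (ℝ × X) × ℝ => (r.1.1 * r.2, r.1.2)))).stronglyMeasurable

theorem hasFlowDeriv_of_forall_ae_eq_add_integral [SFinite ν]
    (hϕ : ∀ t, MeasurePreserving (ϕ t) ν ν) (hF : Measurable F) (hg : Measurable g)
    (hgi : Integrable g ν)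
    (h : ∀ t, ∀ᵐ p ∂ν, F (ϕ t p) = F p + ∫ s in (0 : ℝ)..t, g (ϕ s p)) :
    HasFlowDeriv ϕ ν F g := by
  have hset : MeasurableSet
      {q : ℝ × X | F (ϕ q.1 q.2) = F q.2 + ∫ s in (0 : ℝ)..q.1, g (ϕ s q.2)} :=
    measurableSet_eq_fun (hF.comp (measurable_flow ϕ))
      ((hF.comp measurable_snd).add (measurable_intervalIntegral_comp_flow hg))
  have horbit : ∀ᵐ p ∂ν, ∀ᵐ t ∂volume.restrict (Icc (0 : ℝ) 1),
      F (ϕ t p) = F p + ∫ s in (0 : ℝ)..t, g (ϕ s p) :=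
    (Measure.ae_ae_comm hset).1 (.of_forall h)
  filter_upwards [horbit, (integrable_comp_flow_prod hϕ hgi 0 1).swap.prod_right_ae] with p hp hgp
  have hgp' : IntervalIntegrable (fun s => g (ϕ s p)) volume 0 1 := intervalIntegrable_iff.2 hgp
  refine ⟨fun t => F p + ∫ s in (0 : ℝ)..t, g (ϕ s p), ?_, ?_⟩
  · exact (LipschitzWith.const (F p)).lipschitzOnWith.absolutelyContinuousOnInterval.add
      (hgp'.absolutelyContinuousOnInterval_intervalIntegral left_mem_uIcc)
  · filter_upwards [hp, ae_restrict_of_ae hgp'.ae_hasDerivAt_integral,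
      ae_restrict_mem measurableSet_Icc] with t ht hderiv hmem
    rw [← uIcc_of_le zero_le_one] at hmem
    exact ⟨ht.symm, (hderiv hmem 0 left_mem_uIcc).const_add (F p)⟩

theorem integral_mul_comp_flow (hϕ : ∀ t, MeasurePreserving (ϕ t) ν ν) (t : ℝ) :
    ∫ p, φ p * F (ϕ t p) ∂ν = ∫ p, φ (ϕ (-t) p) * F p ∂ν := by
  rw [← integral_comp_flow hϕ t fun p => φ (ϕ (-t) p) * F p]
  simp only [← ϕ.map_add, neg_add_cancel, ϕ.map_zero_apply]

theorem integral_intervalIntegral_mul_swap [SFinite ν] (hϕ : ∀ t, MeasurePreserving (ϕ t) ν ν)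
    (hφ : Measurable φ) {C : ℝ} (hC : ∀ p, ‖φ p‖ ≤ C) (hg : Integrable g ν) (a b : ℝ) :
    ∫ p, φ p * (∫ s in a..b, g (ϕ s p)) ∂ν = ∫ s in a..b, (∫ p, φ p * g (ϕ s p) ∂ν) := by
  rw [intervalIntegral_integral_swap]
  · simp only [intervalIntegral.integral_const_mul]
  · exact (integrable_comp_flow_prod hϕ hg a b).bdd_mul
      (hφ.comp measurable_snd).aestronglyMeasurable (.of_forall fun q => hC q.2)

theorem integral_flow_sub_mul [SFinite ν]
    (hφ : ∀ p t, HasDerivAt (fun s => φ (ϕ s p)) (φ' (ϕ t p)) t) (hφ' : Continuous φ') {C : ℝ}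
    (hC : ∀ p, ‖φ' p‖ ≤ C) (hF : Integrable F ν) (t : ℝ) :
    ∫ p, (φ (ϕ t p) - φ p) * F p ∂ν = ∫ s in (0 : ℝ)..t, (∫ p, φ' (ϕ s p) * F p ∂ν) := by
  have hftc (p : X) : φ (ϕ t p) - φ p = ∫ s in (0 : ℝ)..t, φ' (ϕ s p) := by
    have hcont : Continuous fun s => φ' (ϕ s p) :=
      hφ'.comp (ϕ.continuous continuous_id continuous_const)
    rw [intervalIntegral.integral_eq_sub_of_hasDerivAt (fun s _ => hφ p s)
      (hcont.intervalIntegrable 0 t), ϕ.map_zero_apply]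
  have hint : Integrable (fun q : ℝ × X => φ' (ϕ q.1 q.2) * F q.2)
      ((volume.restrict (uIoc 0 t)).prod ν) := by
    have : IsFiniteMeasure (volume.restrict (uIoc 0 t)) := ⟨by simp [uIoc]⟩
    exact (hF.comp_snd _).bdd_mul (hφ'.measurable.comp (measurable_flow ϕ)).aestronglyMeasurable
      (.of_forall fun q => hC _)
  rw [intervalIntegral_integral_swap hint]
  simp only [hftc, intervalIntegral.integral_mul_const]

theorem integral_mul_flow_sub_eq [SFinite ν] (hϕ : ∀ t, MeasurePreserving (ϕ t) ν ν)
    (hφ : ∀ p t, HasDerivAt (fun s => φ (ϕ s p)) (φ' (ϕ t p)) t) (hφm : Measurable φ)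
    (hφ' : Continuous φ') {C C' : ℝ} (hC : ∀ p, ‖φ p‖ ≤ C) (hC' : ∀ p, ‖φ' p‖ ≤ C')
    (hF : Integrable F ν) (hg : Integrable g ν)
    (hweak : ∀ s, ∫ p, φ (ϕ s p) * g p ∂ν = -∫ p, φ' (ϕ s p) * F p ∂ν) (t : ℝ) :
    ∫ p, φ p * (F (ϕ t p) - F p) ∂ν = ∫ p, φ p * (∫ s in (0 : ℝ)..t, g (ϕ s p)) ∂ν := by
  have hFt : Integrable (fun p => F (ϕ t p)) ν := (hϕ t).integrable_comp_of_integrable hF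
  have hφt : Measurable fun p => φ (ϕ (-t) p) := hφm.comp (measurable_flow_apply ϕ (-t))
  have hbdd {ψ G : X → ℝ} (hψ : Measurable ψ) (hψC : ∀ p, ‖ψ p‖ ≤ C) (hG : Integrable G ν) :
      Integrable (fun p => ψ p * G p) ν :=
    hG.bdd_mul hψ.aestronglyMeasurable (.of_forall hψC)
  calc ∫ p, φ p * (F (ϕ t p) - F p) ∂ν
      = ∫ p, (φ (ϕ (-t) p) - φ p) * F p ∂ν := by
        simp only [mul_sub, sub_mul]
        rw [integral_sub (hbdd hφm hC hFt) (hbdd hφm hC hF),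
          integral_sub (hbdd hφt (fun p => hC _) hF) (hbdd hφm hC hF),
          integral_mul_comp_flow hϕ]
    _ = ∫ s in (0 : ℝ)..-t, (∫ p, φ' (ϕ s p) * F p ∂ν) :=
        integral_flow_sub_mul hφ hφ' hC' hF (-t)
    _ = -∫ s in (0 : ℝ)..-t, (∫ p, φ p * g (ϕ (-s) p) ∂ν) := by
        simp only [integral_mul_comp_flow hϕ, neg_neg, hweak, intervalIntegral.integral_neg]
    _ = ∫ s in (0 : ℝ)..t, (∫ p, φ p * g (ϕ s p) ∂ν) := by
        rw [intervalIntegral.integral_comp_neg fun s => ∫ p, φ p * g (ϕ s p) ∂ν, neg_neg, neg_zero,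
          intervalIntegral.integral_symm, neg_neg]
    _ = ∫ p, φ p * (∫ s in (0 : ℝ)..t, g (ϕ s p)) ∂ν :=
        (integral_intervalIntegral_mul_swap hϕ hφm hC hg 0 t).symm

end FlowDerivative

section Integrability

variable {X : Type*} [MeasurableSpace X] {ν : Measure X} {F : X → ℝ} {β β' : ℝ → ℝ} {S : Set ℝ}
  {K : ℝ≥0}

theorem integral_sum_sum {ι : Type*} [Fintype ι] {f : ι → ι → X → ℝ}
    (hf : ∀ i j, Integrable (f i j) ν) :
    ∫ p, ∑ i, ∑ j, f i j p ∂ν = ∑ i, ∑ j, ∫ p, f i j p ∂ν := by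
  rw [integral_finsetSum _ fun i _ => integrable_finsetSum _ fun j _ => hf i j]
  exact Finset.sum_congr rfl fun i _ => integral_finsetSum _ fun j _ => hf i j

theorem integrable_comp_of_lipschitzOnWith [IsFiniteMeasure ν] (hβ : LipschitzOnWith K β S)
    (hF : Integrable F ν) (hFS : ∀ᵐ p ∂ν, F p ∈ S) : Integrable (β ∘ F) ν := by
  obtain ⟨β₁, hβ₁, hEq⟩ := hβ.extend_real
  have hint : Integrable (fun p => β₁ (F p)) ν := by
    refine Integrable.mono' ((hF.norm.const_mul (K : ℝ)).add (integrable_const ‖β₁ 0‖))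
      (hβ₁.continuous.comp_aestronglyMeasurable hF.1) (.of_forall fun p => ?_)
    have := hβ₁.dist_le_mul (F p) 0
    rw [dist_eq_norm, dist_zero_right] at this
    exact (norm_le_norm_sub_add _ (β₁ 0)).trans (add_le_add_left this _)
  exact hint.congr (hFS.mono fun p hp => (hEq hp).symm)

theorem aestronglyMeasurable_comp_of_hasDerivAt (hβ : ∀ x ∈ S, HasDerivAt β (β' x) x)
    (hF : AEMeasurable F ν) (hFS : ∀ᵐ p ∂ν, F p ∈ S) : AEStronglyMeasurable (β' ∘ F) ν :=
  ((measurable_deriv β).comp_aemeasurable hF).aestronglyMeasurable.congr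
    (hFS.mono fun _ hp => (hβ _ hp).deriv)

end Integrability

section Rotations

variable {V E : Type*} [NormedAddCommGroup V] [NormedAddCommGroup E] [InnerProductSpace ℝ E]
  [FiniteDimensional ℝ E] {J : E →L[ℝ] E}

theorem continuous_exp_smul (J : E →L[ℝ] E) : Continuous fun t : ℝ => NormedSpace.exp (t • J) :=
  continuous_iff_continuousAt.2 fun t => (hasDerivAt_exp_smul_const' (𝕂 := ℝ) J t).continuousAt

theorem exp_add_smul (J : E →L[ℝ] E) (s t : ℝ) :
    NormedSpace.exp ((s + t) • J) = NormedSpace.exp (s • J) * NormedSpace.exp (t • J) := by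
  let : NormedAlgebra ℚ (E →L[ℝ] E) := .restrictScalars ℚ ℝ _
  rw [add_smul, NormedSpace.exp_add_of_commute (((Commute.refl J).smul_left s).smul_right t)]

theorem exp_smul_mem_unitary (hJ : J ∈ skewAdjoint (E →L[ℝ] E)) (t : ℝ) :
    NormedSpace.exp (t • J) ∈ unitary (E →L[ℝ] E) := by
  let : NormedAlgebra ℚ (E →L[ℝ] E) := .restrictScalars ℚ ℝ _
  exact NormedSpace.exp_mem_unitary_of_mem_skewAdjoint (skewAdjoint.smul_mem t hJ)

theorem norm_exp_smul_apply (hJ : J ∈ skewAdjoint (E →L[ℝ] E)) (t : ℝ) (z : E) :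
    ‖NormedSpace.exp (t • J) z‖ = ‖z‖ :=
  ContinuousLinearMap.norm_map_of_mem_unitary (exp_smul_mem_unitary hJ t) z

theorem inner_apply_self_of_mem_skewAdjoint (hJ : J ∈ skewAdjoint (E →L[ℝ] E)) (z : E) :
    ⟪J z, z⟫ = 0 := by
  have h := ContinuousLinearMap.adjoint_inner_left J z z
  rw [← ContinuousLinearMap.star_eq_adjoint, skewAdjoint.mem_iff.1 hJ,
    neg_apply, inner_neg_left, real_inner_comm (J z)] at h
  linarith

variable (V) in
/-- The flow `(y, z) ↦ (y, exp (t J) z)` of the field `z ↦ J z` in the second variable. It rotates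
the second variable when `J` is skew-adjoint. -/
def expFlow (J : E →L[ℝ] E) : Flow ℝ (V × E) where
  toFun t p := (p.1, NormedSpace.exp (t • J) p.2)
  cont' := continuous_snd.fst.prodMk
    (((continuous_exp_smul J).comp continuous_fst).clm_apply continuous_snd.snd)
  map_add' s t p := by simp only [exp_add_smul, mul_apply_eq_comp]
  map_zero' p := by simp [NormedSpace.exp_zero]

theorem expFlow_apply (J : E →L[ℝ] E) (t : ℝ) (p : V × E) :
    expFlow V J t p = (p.1, NormedSpace.exp (t • J) p.2) := rfl

theorem norm_expFlow (hJ : J ∈ skewAdjoint (E →L[ℝ] E)) (t : ℝ) (p : V × E) :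
    ‖expFlow V J t p‖ = ‖p‖ := by
  simp [expFlow_apply, Prod.norm_def, norm_exp_smul_apply hJ]

theorem hasDerivAt_exp_smul_apply (J : E →L[ℝ] E) (t : ℝ) (z : E) :
    HasDerivAt (fun s : ℝ => NormedSpace.exp (s • J) z) (J (NormedSpace.exp (t • J) z)) t := by
  simpa using (hasDerivAt_exp_smul_const' (𝕂 := ℝ) J t).clm_apply (hasDerivAt_const t z)

theorem tsupport_comp_expFlow_subset {φ : V × E → ℝ} {R : ℝ}
    (hJ : J ∈ skewAdjoint (E →L[ℝ] E)) (hφ : tsupport φ ⊆ Metric.ball 0 R) (t : ℝ) :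
    tsupport (fun p => φ (expFlow V J t p)) ⊆ Metric.ball 0 R := by
  intro p hp
  have : expFlow V J t p ∈ tsupport φ :=
    tsupport_comp_subset_preimage φ ((expFlow V J).continuous_toFun t) hp
  simpa [norm_expFlow hJ] using hφ this

variable [NormedSpace ℝ V] {φ : V × E → ℝ}

theorem hasDerivAt_comp_expFlow (hφ : Differentiable ℝ φ) (p : V × E) (t : ℝ) :
    HasDerivAt (fun s => φ (expFlow V J s p))
      (fderiv ℝ φ (expFlow V J t p) (0, J (expFlow V J t p).2)) t :=
  (hφ _).hasFDerivAt.comp_hasDerivAt t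
    ((hasDerivAt_const t p.1).prodMk (hasDerivAt_exp_smul_apply J t p.2))

theorem contDiff_expFlow (J : E →L[ℝ] E) (t : ℝ) : ContDiff ℝ 1 (expFlow V J t) := by
  have : ContDiff ℝ 1 fun p : V × E => (p.1, NormedSpace.exp (t • J) p.2) := by fun_prop
  exact this

theorem fderiv_comp_expFlow (hφ : ContDiff ℝ 1 φ) (t : ℝ) (p : V × E) :
    fderiv ℝ (fun q => φ (expFlow V J t q)) p (0, J p.2) =
      fderiv ℝ φ (expFlow V J t p) (0, J (expFlow V J t p).2) := by
  have h₁ := hasDerivAt_comp_expFlow (J := J)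
    ((hφ.comp (contDiff_expFlow J t)).differentiable one_ne_zero) p 0
  have h₂ := (hasDerivAt_comp_expFlow (J := J) (hφ.differentiable one_ne_zero) p
    (t + 0)).comp_const_add t 0
  simp only [Function.comp_apply, ← Flow.map_add, Flow.map_zero_apply, add_zero] at h₁ h₂
  exact h₁.unique h₂

theorem hasCompactSupport_of_tsupport_subset_ball {X : Type*} [NormedAddCommGroup X]
    [ProperSpace X] {φ : X → ℝ} {R : ℝ} (hφ : tsupport φ ⊆ Metric.ball 0 R) :
    HasCompactSupport φ :=
  Metric.isCompact_of_isClosed_isBounded (isClosed_tsupport φ) (Metric.isBounded_ball.subset hφ)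

end Rotations

section Truncation

variable {V E : Type*} [NormedAddCommGroup V] [InnerProductSpace ℝ V] [FiniteDimensional ℝ V]
  [MeasurableSpace V] [BorelSpace V] [NormedAddCommGroup E] [InnerProductSpace ℝ E]
  [FiniteDimensional ℝ E] [MeasurableSpace E] [BorelSpace E] {J : E →L[ℝ] E} {Y : Set V} {R : ℝ}
  {F g φ : V × E → ℝ}

/-- Lebesgue measure on the part of `Y × E` in the open ball of radius `R`. The truncation turns
local integrability into integrability, and rotations of `E` preserve it. -/
def truncatedVolume (Y : Set V) (R : ℝ) : Measure (V × E) :=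
  volume.restrict (Y ×ˢ univ ∩ Metric.ball 0 R)

instance (Y : Set V) (R : ℝ) : IsFiniteMeasure (truncatedVolume (E := E) Y R) :=
  ⟨by
    rw [truncatedVolume, Measure.restrict_apply_univ]
    exact (measure_mono inter_subset_right).trans_lt Metric.isBounded_ball.measure_lt_top⟩

theorem ae_truncatedVolume_mem (hY : MeasurableSet Y) :
    ∀ᵐ p ∂truncatedVolume (E := E) Y R, p.1 ∈ Y ∧ p ∈ Metric.ball 0 R := by
  filter_upwards [ae_restrict_mem ((hY.prod .univ).inter Metric.isOpen_ball.measurableSet)]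
    with p hp using ⟨hp.1.1, hp.2⟩

theorem setIntegral_eq_integral_truncatedVolume (hY : MeasurableSet Y)
    (hF : ∀ p ∉ Metric.ball 0 R, F p = 0) :
    ∫ p in Y ×ˢ univ, F p = ∫ p, F p ∂truncatedVolume Y R :=
  setIntegral_eq_of_subset_of_forall_sdiff_eq_zero (hY.prod .univ) inter_subset_left
    fun p hp => hF p fun hball => hp.2 ⟨hp.1, hball⟩

theorem measurePreserving_expFlow (hJ : J ∈ skewAdjoint (E →L[ℝ] E)) (hY : MeasurableSet Y)
    (R t : ℝ) :
    MeasurePreserving (expFlow V J t) (truncatedVolume Y R) (truncatedVolume Y R) := by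
  have hexp : MeasurePreserving (fun z : E => NormedSpace.exp (t • J) z) :=
    (Unitary.linearIsometryEquiv ⟨_, exp_smul_mem_unitary hJ t⟩).measurePreserving
  have hpre : expFlow V J t ⁻¹' (Y ×ˢ univ ∩ Metric.ball 0 R) = Y ×ˢ univ ∩ Metric.ball 0 R := by
    ext p
    simp only [mem_preimage, mem_inter_iff, mem_prod, mem_univ, and_true, mem_ball_zero_iff,
      norm_expFlow hJ]
    rfl
  have hS : MeasurableSet (Y ×ˢ univ ∩ Metric.ball (0 : V × E) R) :=
    (hY.prod .univ).inter Metric.isOpen_ball.measurableSet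
  have h : MeasurePreserving (expFlow V J t) (volume.restrict (expFlow V J t ⁻¹' _)) _ :=
    ((MeasurePreserving.id (volume : Measure V)).prod hexp).restrict_preimage hS
  rwa [hpre] at h

theorem integral_mul_expFlow_sub_eq (hJ : J ∈ skewAdjoint (E →L[ℝ] E)) (hY : MeasurableSet Y)
    (hF : Integrable F (truncatedVolume Y R)) (hg : Integrable g (truncatedVolume Y R))
    (hweak : ∀ φ : V × E → ℝ, ContDiff ℝ 1 φ → tsupport φ ⊆ Metric.ball 0 R →
      ∫ p, φ p * g p ∂truncatedVolume Y R =
        -∫ p, fderiv ℝ φ p (0, J p.2) * F p ∂truncatedVolume Y R)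
    (hφ : ContDiff ℝ 1 φ) (hsupp : tsupport φ ⊆ Metric.ball 0 R) (t : ℝ) :
    ∫ p, φ p * (F (expFlow V J t p) - F p) ∂truncatedVolume Y R =
      ∫ p, φ p * (∫ s in (0 : ℝ)..t, g (expFlow V J s p)) ∂truncatedVolume Y R := by
  have hc := hasCompactSupport_of_tsupport_subset_ball hsupp
  have hφ'c : Continuous fun p : V × E => fderiv ℝ φ p (0, J p.2) :=
    (hφ.continuous_fderiv one_ne_zero).clm_apply (by fun_prop)
  obtain ⟨C, hC⟩ := hφ.continuous.bounded_above_of_compact_support hc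
  obtain ⟨C', hC'⟩ := hφ'c.bounded_above_of_compact_support
    ((hc.fderiv ℝ).mono fun p hp h => hp (by simp [h]))
  refine integral_mul_flow_sub_eq (measurePreserving_expFlow hJ hY R)
    (hasDerivAt_comp_expFlow (hφ.differentiable one_ne_zero)) hφ.continuous.measurable hφ'c hC hC'
    hF hg (fun s => ?_) t
  have hφs : ContDiff ℝ 1 fun p => φ (expFlow V J s p) := hφ.comp (contDiff_expFlow J s)
  simpa only [fderiv_comp_expFlow hφ] using hweak _ hφs
    (tsupport_comp_expFlow_subset hJ hsupp s)

theorem hasFlowDeriv_expFlow (hJ : J ∈ skewAdjoint (E →L[ℝ] E)) (hY : MeasurableSet Y)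
    (hFm : Measurable F) (hgm : Measurable g)
    (hF : Integrable F (truncatedVolume Y R)) (hg : Integrable g (truncatedVolume Y R))
    (hweak : ∀ φ : V × E → ℝ, ContDiff ℝ 1 φ → tsupport φ ⊆ Metric.ball 0 R →
      ∫ p, φ p * g p ∂truncatedVolume Y R =
        -∫ p, fderiv ℝ φ p (0, J p.2) * F p ∂truncatedVolume Y R) :
    HasFlowDeriv (expFlow V J) (truncatedVolume Y R) F g := by
  have hϕ := measurePreserving_expFlow hJ hY R
  refine hasFlowDeriv_of_forall_ae_eq_add_integral hϕ hFm hgm hg fun t => ?_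
  have hint₁ : Integrable (fun p => F (expFlow V J t p) - F p) (truncatedVolume Y R) :=
    ((hϕ t).integrable_comp_of_integrable hF).sub hF
  have hint₂ := integrable_intervalIntegral_comp_flow hϕ hg 0 t
  have hzero := Metric.isOpen_ball.ae_eq_zero_of_integral_contDiff_smul_eq_zero
    ((hint₁.sub hint₂).locallyIntegrable.locallyIntegrableOn (Metric.ball 0 R))
    fun φ hφ hφc hsupp => ?_
  · filter_upwards [hzero, ae_truncatedVolume_mem hY] with p hp hmem
    exact eq_add_of_sub_eq' (sub_eq_zero.1 (hp hmem.2))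
  · obtain ⟨C, hC⟩ := hφ.continuous.bounded_above_of_compact_support hφc
    have hm := hφ.continuous.aestronglyMeasurable (μ := truncatedVolume Y R)
    simp only [Pi.sub_apply, smul_eq_mul, mul_sub _ (_ - _)]
    rw [integral_sub (hint₁.bdd_mul hm (.of_forall hC)) (hint₂.bdd_mul hm (.of_forall hC)),
      integral_mul_expFlow_sub_eq hJ hY hF hg hweak (hφ.of_le (by simp)) hsupp, sub_self]

end Truncation

section PlaneRotations

variable {ι E : Type*} [Fintype ι] [NormedAddCommGroup E] [InnerProductSpace ℝ E]

/-- The infinitesimal rotation `z ↦ ⟪v, z⟫ u - ⟪u, z⟫ v` in the plane of `u` and `v`. As `u` and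
`v` run through an orthonormal basis, these fields span the directions tangent to the spheres. -/
def planeRotation (u v : E) : E →L[ℝ] E :=
  InnerProductSpace.rankOne ℝ u v - InnerProductSpace.rankOne ℝ v u

theorem planeRotation_apply (u v z : E) : planeRotation u v z = ⟪v, z⟫ • u - ⟪u, z⟫ • v := rfl

theorem sum_inner_apply_planeRotation (b : OrthonormalBasis ι ℝ E) (A : E →ₗ[ℝ] E) (z : E) :
    ∑ i, ∑ j, ⟪A (planeRotation (b i) (b j) z), planeRotation (b i) (b j) z⟫ =
      2 * (‖z‖ ^ 2 * LinearMap.trace ℝ E A - ⟪A z, z⟫) := by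
  have hinner : ⟪A z, z⟫ = ∑ i, ∑ j, ⟪b i, z⟫ * ⟪b j, z⟫ * ⟪A (b j), b i⟫ := by
    conv_lhs => rw [← b.sum_repr' z]
    simp [sum_inner, inner_sum, real_inner_smul_left, real_inner_smul_right, mul_assoc]
  have htrace : ‖z‖ ^ 2 * LinearMap.trace ℝ E A = ∑ i, ∑ j, ⟪b j, z⟫ ^ 2 * ⟪A (b i), b i⟫ := by
    simp only [A.trace_eq_sum_inner b, ← Finset.sum_mul, b.sum_sq_inner_right, Finset.mul_sum,
      real_inner_comm (b _) (A _)]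
  have hterm (i j : ι) :
      ⟪A (planeRotation (b i) (b j) z), planeRotation (b i) (b j) z⟫ =
        (⟪b j, z⟫ ^ 2 * ⟪A (b i), b i⟫ - ⟪b i, z⟫ * ⟪b j, z⟫ * ⟪A (b j), b i⟫) +
        (⟪b i, z⟫ ^ 2 * ⟪A (b j), b j⟫ - ⟪b j, z⟫ * ⟪b i, z⟫ * ⟪A (b i), b j⟫) := by
    simp only [planeRotation_apply, map_sub, map_smul, inner_sub_left, inner_sub_right,
      real_inner_smul_left, real_inner_smul_right]
    ring
  simp only [hterm, Finset.sum_add_distrib]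
  rw [two_mul, Finset.sum_comm (f := fun i j => _ ^ 2 * ⟪A (b j), b j⟫ - _), hinner, htrace]
  simp only [Finset.sum_sub_distrib]

theorem sum_planeRotation_apply_apply (b : OrthonormalBasis ι ℝ E) (z : E) :
    ∑ i, ∑ j, planeRotation (b i) (b j) (planeRotation (b i) (b j) z) =
      (-(2 * (Module.finrank ℝ E - 1)) : ℝ) • z := by
  classical
  have hterm (i j : ι) : planeRotation (b i) (b j) (planeRotation (b i) (b j) z) =
      ((if i = j then ⟪b j, z⟫ else 0) • b i - ⟪b i, z⟫ • b i) +
      ((if i = j then ⟪b i, z⟫ else 0) • b j - ⟪b j, z⟫ • b j) := by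
    simp only [planeRotation_apply, inner_sub_right, real_inner_smul_right, b.inner_eq_ite,
      eq_comm (a := j), sub_smul]
    split_ifs <;> simp <;> abel
  simp only [hterm, Finset.sum_add_distrib, Finset.sum_sub_distrib, ite_smul, zero_smul]
  simp [b.sum_repr', Module.finrank_eq_card_basis b.toBasis, ← Finset.smul_sum]
  module

variable [FiniteDimensional ℝ E]

theorem planeRotation_mem_skewAdjoint (u v : E) :
    planeRotation u v ∈ skewAdjoint (E →L[ℝ] E) := by
  simp [skewAdjoint.mem_iff, ContinuousLinearMap.star_eq_adjoint, planeRotation]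

theorem sum_inner_planeRotation_mul_inner (b : OrthonormalBasis ι ℝ E) (x y z : E) :
    ∑ i, ∑ j, ⟪x, planeRotation (b i) (b j) z⟫ * ⟪y, planeRotation (b i) (b j) z⟫ =
      2 * (‖z‖ ^ 2 * ⟪x, y⟫ - ⟪x, z⟫ * ⟪y, z⟫) := by
  simpa [real_inner_smul_left, InnerProductSpace.trace_rankOne] using
    sum_inner_apply_planeRotation b (InnerProductSpace.rankOne ℝ y x).toLinearMap z

theorem trace_eq_zero_of_mem_skewAdjoint {J : E →L[ℝ] E} (hJ : J ∈ skewAdjoint (E →L[ℝ] E)) :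
    LinearMap.trace ℝ E J = 0 := by
  rw [LinearMap.trace_eq_sum_inner _ (stdOrthonormalBasis ℝ E)]
  exact Finset.sum_eq_zero fun i _ => by
    rw [real_inner_comm]
    exact inner_apply_self_of_mem_skewAdjoint hJ _

end PlaneRotations

section RotationCoefficients

variable {V E : Type*} [NormedAddCommGroup E] [InnerProductSpace ℝ E] {Ψ : V × E → E} {C : ℝ}

/-- The divergence in `z` of the projected field `Π(z)Ψ(y, z)`, as in `divPi` but in arbitrary
dimension `d`: the mean curvature factor `2` becomes `d - 1`. -/
def divProj (Ψ : V × E → E) (p : V × E) : ℝ :=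
  LinearMap.trace ℝ E (fderiv ℝ (fun w => Ψ (p.1, w)) p.2) -
    ⟪‖p.2‖⁻¹ • p.2, fderiv ℝ (fun w => Ψ (p.1, w)) p.2 (‖p.2‖⁻¹ • p.2)⟫ -
    (Module.finrank ℝ E - 1) * ⟪Ψ p, ‖p.2‖⁻¹ • p.2⟫ / ‖p.2‖

/-- The coefficient of the field `z ↦ J z` in the expansion of `Π(z)Ψ` along rotation fields. -/
def rotCoeff (J : E →L[ℝ] E) (Ψ : V × E → E) (p : V × E) : ℝ :=
  ⟪Ψ p, J p.2⟫ / ‖p.2‖ ^ 2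

/-- The derivative of `rotCoeff J Ψ` along the field `z ↦ J z`, for skew-adjoint `J`. The weight
`‖z‖ ^ 2` is constant along the field and is not differentiated. -/
def rotCoeffDeriv (J : E →L[ℝ] E) (Ψ : V × E → E) (p : V × E) : ℝ :=
  (⟪fderiv ℝ (fun w => Ψ (p.1, w)) p.2 (J p.2), J p.2⟫ + ⟪Ψ p, J (J p.2)⟫) / ‖p.2‖ ^ 2

theorem abs_rotCoeff_le (J : E →L[ℝ] E) (hΨ : ∀ p, ‖Ψ p‖ ≤ C * ‖p.2‖) (p : V × E) :
    |rotCoeff J Ψ p| ≤ |C| * ‖J‖ := by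
  rw [rotCoeff, abs_div, abs_of_nonneg (sq_nonneg ‖p.2‖)]
  refine div_le_of_le_mul₀ (sq_nonneg _) (by positivity) ?_
  calc |⟪Ψ p, J p.2⟫| ≤ ‖Ψ p‖ * ‖J p.2‖ := abs_real_inner_le_norm _ _
    _ ≤ (|C| * ‖p.2‖) * (‖J‖ * ‖p.2‖) := by
        gcongr
        · exact (hΨ p).trans (by gcongr; exact le_abs_self C)
        · exact J.le_opNorm _
    _ = |C| * ‖J‖ * ‖p.2‖ ^ 2 := by ring

theorem abs_rotCoeffDeriv_le (J : E →L[ℝ] E) (hΨ : ∀ p, ‖Ψ p‖ ≤ C * ‖p.2‖)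
    (hC : ∀ y z, ‖fderiv ℝ (fun w => Ψ (y, w)) z‖ ≤ C) (p : V × E) :
    |rotCoeffDeriv J Ψ p| ≤ 2 * C * ‖J‖ ^ 2 := by
  have hC₀ : 0 ≤ C := (norm_nonneg _).trans (hC p.1 p.2)
  have hJ := J.le_opNorm p.2
  rw [rotCoeffDeriv, abs_div, abs_of_nonneg (sq_nonneg ‖p.2‖)]
  refine div_le_of_le_mul₀ (sq_nonneg _) (by positivity) ?_
  calc |⟪fderiv ℝ (fun w => Ψ (p.1, w)) p.2 (J p.2), J p.2⟫ + ⟪Ψ p, J (J p.2)⟫|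
      ≤ ‖fderiv ℝ (fun w => Ψ (p.1, w)) p.2 (J p.2)‖ * ‖J p.2‖ + ‖Ψ p‖ * ‖J (J p.2)‖ :=
        (abs_add_le _ _).trans
          (add_le_add (abs_real_inner_le_norm _ _) (abs_real_inner_le_norm _ _))
    _ ≤ C * (‖J‖ * ‖p.2‖) * (‖J‖ * ‖p.2‖) + C * ‖p.2‖ * (‖J‖ * (‖J‖ * ‖p.2‖)) := by
        gcongr
        · exact ((fderiv ℝ _ _).le_of_opNorm_le (hC p.1 p.2) _).trans (by gcongr)
        · exact hΨ p
        · exact (J.le_opNorm _).trans (by gcongr)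
    _ = 2 * C * ‖J‖ ^ 2 * ‖p.2‖ ^ 2 := by ring

theorem sum_rotCoeffDeriv_planeRotation {ι : Type*} [Fintype ι] (b : OrthonormalBasis ι ℝ E)
    {p : V × E} (hp : p.2 ≠ 0) :
    ∑ i, ∑ j, rotCoeffDeriv (planeRotation (b i) (b j)) Ψ p = 2 * divProj Ψ p := by
  have hnorm : ‖p.2‖ ≠ 0 := norm_ne_zero_iff.2 hp
  have htrace := sum_inner_apply_planeRotation b
    (fderiv ℝ (fun w => Ψ (p.1, w)) p.2).toLinearMap p.2
  simp only [ContinuousLinearMap.coe_coe] at htrace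
  simp only [rotCoeffDeriv, ← Finset.sum_div, Finset.sum_add_distrib, htrace, ← inner_sum,
    sum_planeRotation_apply_apply, divProj, map_smul, real_inner_smul_left, real_inner_smul_right,
    real_inner_comm p.2 (fderiv ℝ _ _ _)]
  field_simp
  ring

variable [FiniteDimensional ℝ E]

theorem sum_rotCoeff_planeRotation_mul {ι : Type*} [Fintype ι] (b : OrthonormalBasis ι ℝ E)
    {p : V × E} (hp : p.2 ≠ 0) {d : E} (hd : ⟪d, p.2⟫ = 0) :
    ∑ i, ∑ j, rotCoeff (planeRotation (b i) (b j)) Ψ p * ⟪d, planeRotation (b i) (b j) p.2⟫ =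
      2 * ⟪Ψ p, d⟫ := by
  have hnorm : ‖p.2‖ ≠ 0 := norm_ne_zero_iff.2 hp
  simp only [rotCoeff, div_mul_eq_mul_div, ← Finset.sum_div, sum_inner_planeRotation_mul_inner, hd]
  field_simp
  ring

theorem hasDerivAt_rotCoeff_expFlow [NormedAddCommGroup V] {J : E →L[ℝ] E}
    (hΨ : ∀ y, Differentiable ℝ fun z => Ψ (y, z))
    (hJ : J ∈ skewAdjoint (E →L[ℝ] E)) (p : V × E) (t : ℝ) :
    HasDerivAt (fun s => rotCoeff J Ψ (expFlow V J s p)) (rotCoeffDeriv J Ψ (expFlow V J t p))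
      t := by
  have hexp := hasDerivAt_exp_smul_apply J t p.2
  have hΨexp := (hΨ p.1 (NormedSpace.exp (t • J) p.2)).hasFDerivAt.comp_hasDerivAt t hexp
  have hinner := hΨexp.inner ℝ (J.hasFDerivAt.comp_hasDerivAt t hexp)
  simpa only [rotCoeff, rotCoeffDeriv, expFlow_apply, norm_exp_smul_apply hJ, Function.comp_apply,
    add_comm ⟪Ψ _, _⟫] using hinner.div_const (‖p.2‖ ^ 2)

end RotationCoefficients

section TestFields

variable {V E : Type*} [NormedAddCommGroup V] [NormedAddCommGroup E] [InnerProductSpace ℝ E]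
  {Ψ : V × E → E}

/-- The class of test fields `TestC` for arbitrary parameter and target spaces. -/
structure IsTestField (Ψ : V × E → E) : Prop where
  continuous : Continuous Ψ
  hasCompactSupport : HasCompactSupport Ψ
  map_zero : ∀ y, Ψ (y, 0) = 0
  contDiff : ∀ y, ContDiff ℝ 1 fun z => Ψ (y, z)
  exists_norm_fderiv_le : ∃ C : ℝ, ∀ y z, ‖fderiv ℝ (fun w => Ψ (y, w)) z‖ ≤ C

theorem IsTestField.exists_norm_le_mul_norm_snd (hΨ : IsTestField Ψ) :
    ∃ C, (∀ p, ‖Ψ p‖ ≤ C * ‖p.2‖) ∧ ∀ y z, ‖fderiv ℝ (fun w => Ψ (y, w)) z‖ ≤ C := by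
  obtain ⟨C, hC⟩ := hΨ.exists_norm_fderiv_le
  refine ⟨C, fun p => ?_, hC⟩
  simpa [hΨ.map_zero] using convex_univ.norm_image_sub_le_of_norm_fderiv_le (𝕜 := ℝ)
    (fun w _ => (hΨ.contDiff p.1).differentiable one_ne_zero w) (fun w _ => hC p.1 w)
    (mem_univ 0) (mem_univ p.2)

theorem testC_iff_isTestField {N : ℕ} {Ψ : EuclideanSpace ℝ (Fin N) × E3 → E3} :
    TestC N Ψ ↔ IsTestField Ψ :=
  ⟨fun ⟨h₁, h₂, h₃, h₄, h₅⟩ => ⟨h₁, h₂, h₃, h₄, h₅⟩,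
    fun ⟨h₁, h₂, h₃, h₄, h₅⟩ => ⟨h₁, h₂, h₃, h₄, h₅⟩⟩

theorem divPi_eq_divProj {N : ℕ} (Ψ : EuclideanSpace ℝ (Fin N) × E3 → E3)
    (p : EuclideanSpace ℝ (Fin N) × E3) : divPi N Ψ p.1 p.2 = divProj Ψ p := by
  rw [divPi, divProj, LinearMap.trace_eq_sum_inner _ (EuclideanSpace.basisFun (Fin 3) ℝ)]
  norm_num [EuclideanSpace.inner_single_left]

theorem divProj_eq_zero_of_notMem_tsupport {p : V × E} (hp : p ∉ tsupport Ψ) :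
    divProj Ψ p = 0 := by
  have hev : (fun w => Ψ (p.1, w)) =ᶠ[𝓝 p.2] fun _ => 0 :=
    ((Continuous.prodMk_right p.1).tendsto p.2).eventually (notMem_tsupport_iff_eventuallyEq.1 hp)
  simp [divProj, image_eq_zero_of_notMem_tsupport hp, hev.fderiv_eq]

variable [NormedSpace ℝ V] {φ : V × E → ℝ} {J : E →L[ℝ] E}

theorem isTestField_smul_apply (hφ : ContDiff ℝ 1 φ) (hc : HasCompactSupport φ)
    (J : E →L[ℝ] E) : IsTestField fun p => φ p • J p.2 := by
  have hΨ : ContDiff ℝ 1 fun p : V × E => φ p • J p.2 := by fun_prop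
  have hΨc : HasCompactSupport fun p : V × E => φ p • J p.2 := hc.smul_right
  refine ⟨hΨ.continuous, hΨc, by simp, fun y => hΨ.comp (contDiff_prodMk_right y), ?_⟩
  obtain ⟨C, hC⟩ := (hΨ.continuous_fderiv one_ne_zero).bounded_above_of_compact_support
    (hΨc.fderiv ℝ)
  refine ⟨C * ‖ContinuousLinearMap.inr ℝ V E‖, fun y z => ?_⟩
  have hpartial := ((hΨ.differentiable one_ne_zero (y, z)).hasFDerivAt.comp z
    (hasFDerivAt_prodMk_right y z)).fderiv
  simp only [Function.comp_def] at hpartial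
  rw [hpartial]
  exact (ContinuousLinearMap.opNorm_comp_le _ _).trans (by gcongr; exact hC _)

theorem divProj_smul_apply [FiniteDimensional ℝ E] {p : V × E} (hφ : DifferentiableAt ℝ φ p)
    (hJ : J ∈ skewAdjoint (E →L[ℝ] E)) :
    divProj (fun q => φ q • J q.2) p = fderiv ℝ φ p (0, J p.2) := by
  have hφ₂ : HasFDerivAt (fun w => φ (p.1, w))
      ((fderiv ℝ φ p).comp (ContinuousLinearMap.inr ℝ V E)) p.2 :=
    hφ.hasFDerivAt.comp p.2 (hasFDerivAt_prodMk_right p.1 p.2)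
  have hfderiv : fderiv ℝ (fun w => φ (p.1, w) • J w) p.2 =
      φ p • J + ((fderiv ℝ φ p).comp (ContinuousLinearMap.inr ℝ V E)).smulRight (J p.2) :=
    (hφ₂.smul J.hasFDerivAt).fderiv
  have horth := inner_apply_self_of_mem_skewAdjoint hJ p.2
  have horth' : ⟪p.2, J p.2⟫ = 0 := by rw [real_inner_comm, horth]
  simp [divProj, hfderiv, trace_eq_zero_of_mem_skewAdjoint hJ, LinearMap.trace_smulRight,
    inner_add_right, real_inner_smul_left, real_inner_smul_right, horth, horth']

end TestFields

section TestFieldCoefficients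

variable {V E : Type*} [NormedAddCommGroup V] [MeasurableSpace V] [NormedAddCommGroup E]
  [InnerProductSpace ℝ E] [FiniteDimensional ℝ E] [MeasurableSpace E] {J : E →L[ℝ] E}
  {Ψ : V × E → E} {ν : Measure (V × E)}

theorem IsTestField.hasFlowDeriv_rotCoeff (hΨ : IsTestField Ψ)
    (hJ : J ∈ skewAdjoint (E →L[ℝ] E)) :
    HasFlowDeriv (expFlow V J) ν (rotCoeff J Ψ) (rotCoeffDeriv J Ψ) := by
  obtain ⟨C, hC, hC'⟩ := hΨ.exists_norm_le_mul_norm_snd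
  exact hasFlowDeriv_of_hasDerivAt (hasDerivAt_rotCoeff_expFlow
    (fun y => (hΨ.contDiff y).differentiable one_ne_zero) hJ) (C := (2 * C * ‖J‖ ^ 2).toNNReal)
    fun p => NNReal.le_toNNReal_of_coe_le (abs_rotCoeffDeriv_le J hC hC' p)

variable [BorelSpace V] [BorelSpace E]

theorem IsTestField.integrable_rotCoeff_mul (hΨ : IsTestField Ψ) (J : E →L[ℝ] E)
    {f : V × E → ℝ} (hf : Integrable f ν) : Integrable (fun p => rotCoeff J Ψ p * f p) ν := by
  obtain ⟨C, hC, -⟩ := hΨ.exists_norm_le_mul_norm_snd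
  have hmeas : Measurable (rotCoeff J Ψ) :=
    (hΨ.continuous.measurable.inner (J.measurable.comp measurable_snd)).div
      (measurable_snd.norm.pow_const 2)
  exact hf.bdd_mul hmeas.aestronglyMeasurable (.of_forall (abs_rotCoeff_le J hC))

theorem IsTestField.measurable_rotCoeffDeriv (hΨ : IsTestField Ψ) (J : E →L[ℝ] E) :
    Measurable (rotCoeffDeriv J Ψ) := by
  have hfderiv : Measurable fun p : V × E => fderiv ℝ (fun w => Ψ (p.1, w)) p.2 :=
    measurable_fderiv_with_param ℝ (f := fun y w => Ψ (y, w)) hΨ.continuous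
  have hJ : Measurable fun p : V × E => J p.2 := J.measurable.comp measurable_snd
  refine (Measurable.add (.inner ?_ hJ) (hΨ.continuous.measurable.inner (J.measurable.comp hJ))).div
    (measurable_snd.norm.pow_const 2)
  exact isBoundedBilinearMap_apply.continuous.measurable.comp (hfderiv.prodMk hJ)

theorem IsTestField.integrable_rotCoeffDeriv_mul (hΨ : IsTestField Ψ) (J : E →L[ℝ] E)
    {f : V × E → ℝ} (hf : Integrable f ν) : Integrable (fun p => rotCoeffDeriv J Ψ p * f p) ν := by
  obtain ⟨C, hC, hC'⟩ := hΨ.exists_norm_le_mul_norm_snd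
  exact hf.bdd_mul (hΨ.measurable_rotCoeffDeriv J).aestronglyMeasurable
    (.of_forall (abs_rotCoeffDeriv_le J hC hC'))

end TestFieldCoefficients

section WeakProjectionGradient

variable {V E : Type*} [NormedAddCommGroup V] [InnerProductSpace ℝ V] [FiniteDimensional ℝ V]
  [MeasurableSpace V] [BorelSpace V] [NormedAddCommGroup E] [InnerProductSpace ℝ E]
  [FiniteDimensional ℝ E] [MeasurableSpace E] [BorelSpace E] {J : E →L[ℝ] E} {Y : Set V} {R : ℝ}
  {F : V × E → ℝ} {D Ψ : V × E → E}

theorem setIntegral_inner_eq_integral_truncatedVolume (hY : MeasurableSet Y)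
    (hΨ : tsupport Ψ ⊆ Metric.ball 0 R) (D : V × E → E) :
    ∫ p in Y ×ˢ univ, ⟪Ψ p, D p⟫ = ∫ p, ⟪Ψ p, D p⟫ ∂truncatedVolume Y R :=
  setIntegral_eq_integral_truncatedVolume hY fun p hp => by
    rw [image_eq_zero_of_notMem_tsupport fun h => hp (hΨ h), inner_zero_left]

theorem setIntegral_mul_divProj_eq_integral_truncatedVolume (hY : MeasurableSet Y)
    (hΨ : tsupport Ψ ⊆ Metric.ball 0 R) (F : V × E → ℝ) :
    ∫ p in Y ×ˢ univ, F p * divProj Ψ p = ∫ p, F p * divProj Ψ p ∂truncatedVolume Y R :=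
  setIntegral_eq_integral_truncatedVolume hY fun p hp => by
    rw [divProj_eq_zero_of_notMem_tsupport fun h => hp (hΨ h), mul_zero]

theorem ae_truncatedVolume_snd_ne_zero [Nontrivial E] (Y : Set V) (R : ℝ) :
    ∀ᵐ p ∂truncatedVolume (E := E) Y R, p.2 ≠ 0 :=
  ae_restrict_of_ae (Measure.quasiMeasurePreserving_snd.ae (Measure.ae_ne volume (0 : E)))

theorem integrable_inner_apply_snd (hY : MeasurableSet Y)
    (hD : Integrable D (truncatedVolume Y R)) (J : E →L[ℝ] E) :
    Integrable (fun p => ⟪D p, J p.2⟫) (truncatedVolume Y R) := by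
  refine Integrable.mono' (hD.norm.mul_const (‖J‖ * R))
    (hD.1.inner (by fun_prop : Continuous fun p : V × E => J p.2).aestronglyMeasurable) ?_
  filter_upwards [ae_truncatedVolume_mem hY] with p hp
  have hpR : ‖p.2‖ ≤ R := (norm_snd_le p).trans (mem_ball_zero_iff.1 hp.2).le
  exact (norm_inner_le_norm _ _).trans (by gcongr; exact J.le_opNorm_of_le hpR)

/-- `D` is the weak projection gradient in `z ≠ 0` of the function `F` of `(y, z)`, `y ∈ Y`. Local
integrability on `Y × E` is expressed through the truncated volumes. -/
structure HasWeakProjGrad_s19 (Y : Set V) (F : V × E → ℝ) (D : V × E → E) : Prop where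
  integrable : ∀ R, Integrable F (truncatedVolume Y R)
  integrable_grad : ∀ R, Integrable D (truncatedVolume Y R)
  inner_eq_zero : ∀ᵐ p ∂volume.restrict (Y ×ˢ univ), ⟪D p, p.2⟫ = 0
  integral_inner_eq : ∀ Ψ, IsTestField Ψ →
    ∫ p in Y ×ˢ univ, ⟪Ψ p, D p⟫ = -∫ p in Y ×ˢ univ, F p * divProj Ψ p

theorem HasWeakProjGrad_s19.hasFlowDeriv (h : HasWeakProjGrad_s19 Y F D) (hY : MeasurableSet Y)
    (hF : Measurable F) (hD : Measurable D) (hJ : J ∈ skewAdjoint (E →L[ℝ] E)) (R : ℝ) :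
    HasFlowDeriv (expFlow V J) (truncatedVolume Y R) F fun p => ⟪D p, J p.2⟫ := by
  refine hasFlowDeriv_expFlow hJ hY hF (hD.inner (J.measurable.comp measurable_snd))
    (h.integrable R) (integrable_inner_apply_snd hY (h.integrable_grad R) J) fun φ hφ hsupp => ?_
  have hΨsupp : tsupport (fun p => φ p • J p.2) ⊆ Metric.ball 0 R :=
    (tsupport_smul_subset_left φ _).trans hsupp
  have hweak := h.integral_inner_eq _
    (isTestField_smul_apply hφ (hasCompactSupport_of_tsupport_subset_ball hsupp) J)
  rw [setIntegral_inner_eq_integral_truncatedVolume hY hΨsupp,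
    setIntegral_mul_divProj_eq_integral_truncatedVolume hY hΨsupp] at hweak
  simpa only [real_inner_smul_left, divProj_smul_apply (hφ.differentiable one_ne_zero _) hJ,
    real_inner_comm (J _), mul_comm (F _)] using hweak

theorem IsTestField.two_mul_integral_inner [Nontrivial E] {ι : Type*} [Fintype ι]
    (hΨ : IsTestField Ψ) (b : OrthonormalBasis ι ℝ E) (hY : MeasurableSet Y)
    (hD : Integrable D (truncatedVolume Y R)) (hperp : ∀ᵐ p ∂truncatedVolume Y R, ⟪D p, p.2⟫ = 0) :
    2 * ∫ p, ⟪Ψ p, D p⟫ ∂truncatedVolume Y R =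
      ∑ i, ∑ j, ∫ p, rotCoeff (planeRotation (b i) (b j)) Ψ p *
        ⟪D p, planeRotation (b i) (b j) p.2⟫ ∂truncatedVolume Y R := by
  rw [← integral_sum_sum fun i j => hΨ.integrable_rotCoeff_mul _
    (integrable_inner_apply_snd hY hD (planeRotation (b i) (b j))), ← integral_const_mul]
  refine integral_congr_ae ?_
  filter_upwards [ae_truncatedVolume_snd_ne_zero Y R, hperp] with p hp hd
  exact (sum_rotCoeff_planeRotation_mul b hp hd).symm

theorem IsTestField.two_mul_integral_mul_divProj [Nontrivial E] {ι : Type*} [Fintype ι]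
    (hΨ : IsTestField Ψ) (b : OrthonormalBasis ι ℝ E) (hF : Integrable F (truncatedVolume Y R)) :
    2 * ∫ p, F p * divProj Ψ p ∂truncatedVolume Y R =
      ∑ i, ∑ j, ∫ p, rotCoeffDeriv (planeRotation (b i) (b j)) Ψ p * F p ∂truncatedVolume Y R := by
  rw [← integral_sum_sum fun i j =>
    hΨ.integrable_rotCoeffDeriv_mul (planeRotation (b i) (b j)) hF, ← integral_const_mul]
  refine integral_congr_ae ?_
  filter_upwards [ae_truncatedVolume_snd_ne_zero Y R] with p hp
  simp only [← Finset.sum_mul, sum_rotCoeffDeriv_planeRotation b hp]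
  ring

theorem integral_inner_eq_neg_integral_mul_divProj [Nontrivial E] (hY : MeasurableSet Y)
    (hF : Integrable F (truncatedVolume Y R)) (hD : Integrable D (truncatedVolume Y R))
    (hperp : ∀ᵐ p ∂truncatedVolume Y R, ⟪D p, p.2⟫ = 0)
    (hflow : ∀ J ∈ skewAdjoint (E →L[ℝ] E),
      HasFlowDeriv (expFlow V J) (truncatedVolume Y R) F fun p => ⟪D p, J p.2⟫)
    (hΨ : IsTestField Ψ) :
    ∫ p, ⟪Ψ p, D p⟫ ∂truncatedVolume Y R = -∫ p, F p * divProj Ψ p ∂truncatedVolume Y R := by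
  have hparts {J : E →L[ℝ] E} (hJ : J ∈ skewAdjoint (E →L[ℝ] E)) :
      ∫ p, rotCoeff J Ψ p * ⟪D p, J p.2⟫ ∂truncatedVolume Y R =
        -∫ p, rotCoeffDeriv J Ψ p * F p ∂truncatedVolume Y R :=
    (hflow J hJ).integral_mul_eq_neg (measurePreserving_expFlow hJ hY R)
      (hΨ.hasFlowDeriv_rotCoeff hJ) (hΨ.integrable_rotCoeff_mul J hF)
      (hΨ.integrable_rotCoeff_mul J (integrable_inner_apply_snd hY hD J))
      (hΨ.integrable_rotCoeffDeriv_mul J hF)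
  have hinner := hΨ.two_mul_integral_inner (stdOrthonormalBasis ℝ E) hY hD hperp
  simp only [hparts (planeRotation_mem_skewAdjoint _ _), Finset.sum_neg_distrib,
    ← hΨ.two_mul_integral_mul_divProj (stdOrthonormalBasis ℝ E) hF] at hinner
  linarith

end WeakProjectionGradient

section ChainRule

variable {V E : Type*} [NormedAddCommGroup V] [InnerProductSpace ℝ V] [FiniteDimensional ℝ V]
  [MeasurableSpace V] [BorelSpace V] [NormedAddCommGroup E] [InnerProductSpace ℝ E]
  [FiniteDimensional ℝ E] [MeasurableSpace E] [BorelSpace E] {Y : Set V} {F : V × E → ℝ}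
  {D : V × E → E} {β β' : ℝ → ℝ}

theorem integrable_truncatedVolume_of_integrableOn_closedBall {G : Type*} [NormedAddCommGroup G]
    {f : V × E → G}
    (hf : ∀ R : ℝ, 0 < R → IntegrableOn f (Y ×ˢ univ ∩ Metric.closedBall 0 R) volume) (R : ℝ) :
    Integrable f (truncatedVolume Y R) :=
  (hf (max R 1) (by positivity)).mono_set <| inter_subset_inter_right _ <|
    Metric.ball_subset_closedBall.trans (Metric.closedBall_subset_closedBall (le_max_left R 1))

theorem HasWeakProjGrad_s19.comp [Nontrivial E] (h : HasWeakProjGrad_s19 Y F D) (hY : MeasurableSet Y)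
    (hF : Measurable F) (hD : Measurable D)
    (hβ : ∀ R, ∃ S, IsClosed S ∧ Convex ℝ S ∧ (∀ᵐ p ∂truncatedVolume Y R, F p ∈ S) ∧
      (∀ x ∈ S, HasDerivAt β (β' x) x) ∧ ∃ K : ℝ≥0, ∀ x ∈ S, ‖β' x‖₊ ≤ K) :
    HasWeakProjGrad_s19 Y (fun p => β (F p)) fun p => β' (F p) • D p := by
  have hint (R : ℝ) : Integrable (fun p => β (F p)) (truncatedVolume Y R) := by
    obtain ⟨S, -, hSc, hFS, hd, K, hK⟩ := hβ R
    exact integrable_comp_of_lipschitzOnWith (hSc.lipschitzOnWith_of_nnnorm_hasDerivWithin_le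
      (fun x hx => (hd x hx).hasDerivWithinAt) hK) (h.integrable R) hFS
  have hintD (R : ℝ) : Integrable (fun p => β' (F p) • D p) (truncatedVolume Y R) := by
    obtain ⟨S, -, -, hFS, hd, K, hK⟩ := hβ R
    exact (h.integrable_grad R).bdd_smul K
      (aestronglyMeasurable_comp_of_hasDerivAt hd hF.aemeasurable hFS)
      (hFS.mono fun p hp => hK _ hp)
  have hperp : ∀ᵐ p ∂volume.restrict (Y ×ˢ univ), ⟪β' (F p) • D p, p.2⟫ = 0 :=
    h.inner_eq_zero.mono fun p hp => by rw [real_inner_smul_left, hp, mul_zero]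
  refine ⟨hint, hintD, hperp, fun Ψ hΨ => ?_⟩
  obtain ⟨R, hR⟩ := hΨ.hasCompactSupport.isCompact.isBounded.subset_ball 0
  obtain ⟨S, hS, hSc, hFS, hd, K, hK⟩ := hβ R
  rw [setIntegral_inner_eq_integral_truncatedVolume hY hR,
    setIntegral_mul_divProj_eq_integral_truncatedVolume hY hR]
  refine integral_inner_eq_neg_integral_mul_divProj hY (hint R) (hintD R)
    (ae_restrict_of_ae_restrict_of_subset inter_subset_left hperp) (fun J hJ => ?_) hΨ
  simpa only [real_inner_smul_left, Function.comp_def] using (h.hasFlowDeriv hY hF hD hJ R).comp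
    (measurePreserving_expFlow hJ hY R) hS hSc hFS hd hK

end ChainRule

theorem hasDerivAt_sqrt_of_pos {x : ℝ} (hx : 0 < x) : HasDerivAt Real.sqrt (2 * √x)⁻¹ x := by
  simpa only [one_div] using Real.hasDerivAt_sqrt hx.ne'

theorem exists_nnnorm_inv_two_mul_sqrt_le {c : ℝ} (hc : 0 < c) :
    ∃ K : ℝ≥0, ∀ x, c ≤ x → ‖(2 * √x)⁻¹‖₊ ≤ K := by
  refine ⟨(2 * √c)⁻¹.toNNReal, fun x hx => NNReal.le_toNNReal_of_coe_le ?_⟩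
  rw [coe_nnnorm, Real.norm_of_nonneg (by positivity)]
  gcongr

theorem hasWeakProjGrad_of_forall_testC {N : ℕ} {Y : Set (EuclideanSpace ℝ (Fin N))}
    {F : EuclideanSpace ℝ (Fin N) × E3 → ℝ} {D : EuclideanSpace ℝ (Fin N) × E3 → E3}
    (hDmeas : Measurable D)
    (hFloc : ∀ R : ℝ, 0 < R → IntegrableOn F (Y ×ˢ univ ∩ Metric.closedBall 0 R) volume)
    (hDloc : ∀ R : ℝ, 0 < R →
      IntegrableOn (fun p => ‖D p‖) (Y ×ˢ univ ∩ Metric.closedBall 0 R) volume)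
    (hperp : ∀ᵐ p ∂volume.restrict (Y ×ˢ univ), ⟪D p, p.2⟫ = 0)
    (hweak : ∀ Ψ, TestC N Ψ → ∫ p in Y ×ˢ univ, ⟪Ψ p, D p⟫ =
      -∫ p in Y ×ˢ univ, F p * divPi N Ψ p.1 p.2) :
    HasWeakProjGrad_s19 Y F D where
  integrable := integrable_truncatedVolume_of_integrableOn_closedBall hFloc
  integrable_grad := integrable_truncatedVolume_of_integrableOn_closedBall fun R hR =>
    (integrable_norm_iff hDmeas.aestronglyMeasurable).1 (hDloc R hR)
  inner_eq_zero := hperp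
  integral_inner_eq Ψ hΨ := by
    simpa only [divPi_eq_divProj] using hweak Ψ (testC_iff_isTestField.2 hΨ)

theorem stmt19_general {V E : Type*} [NormedAddCommGroup V] [InnerProductSpace ℝ V]
    [FiniteDimensional ℝ V] [MeasurableSpace V] [BorelSpace V] [NormedAddCommGroup E]
    [InnerProductSpace ℝ E] [FiniteDimensional ℝ E] [MeasurableSpace E] [BorelSpace E]
    [Nontrivial E] {Y : Set V} {F : V × E → ℝ} {D : V × E → E} {β β' : ℝ → ℝ}
    (hY : MeasurableSet Y) (hF : Measurable F) (hD : Measurable D)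
    (h : HasWeakProjGrad_s19 Y F D)
    (hinf : ∀ R₁ R₂ : ℝ, 0 < R₁ → 0 < R₂ → ∃ c : ℝ, 0 < c ∧
      ∀ y ∈ Y, ‖y‖ ≤ R₁ → ∀ z : E, ‖z‖ ≤ R₂ → c ≤ F (y, z))
    (hβ : ∀ x, 0 < x → HasDerivAt β (β' x) x)
    (hβ' : ∀ c, 0 < c → ∃ K : ℝ≥0, ∀ x, c ≤ x → ‖β' x‖₊ ≤ K) :
    HasWeakProjGrad_s19 Y (fun p => β (F p)) fun p => β' (F p) • D p := by
  refine h.comp hY hF hD fun R => ?_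
  obtain ⟨c, hc, hcF⟩ := hinf (max R 1) (max R 1) (by positivity) (by positivity)
  refine ⟨Ici c, isClosed_Ici, convex_Ici c, ?_, fun x hx => hβ x (hc.trans_le hx), hβ' c hc⟩
  filter_upwards [ae_truncatedVolume_mem hY] with p hp
  have hpR : ‖p‖ ≤ max R 1 := (mem_ball_zero_iff.1 hp.2).le.trans (le_max_left R 1)
  exact hcF p.1 hp.1 ((norm_fst_le p).trans hpR) p.2 ((norm_snd_le p).trans hpR)

/-- If `0 < F ∈ L¹_loc` has weak projection gradient `D ∈ L¹_loc` in
`z ≠ 0`, is locally bounded below by positive constants, and `F(y,z)/|z| ∈ L¹_loc`, then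
`√F` has weak projection gradient `D/(2√F)` in `z ≠ 0`. -/
theorem stmt19 (N : ℕ) (Y : Set (EuclideanSpace ℝ (Fin N))) (hY : MeasurableSet Y)
    (F : EuclideanSpace ℝ (Fin N) × E3 → ℝ) (D : EuclideanSpace ℝ (Fin N) × E3 → E3)
    (hFmeas : Measurable F) (hDmeas : Measurable D)
    (hFpos : ∀ y ∈ Y, ∀ z : E3, 0 < F (y, z))
    (hFloc : ∀ R : ℝ, 0 < R →
      IntegrableOn F ((Y ×ˢ (Set.univ : Set E3)) ∩ Metric.closedBall 0 R) volume)
    (hDloc : ∀ R : ℝ, 0 < R →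
      IntegrableOn (fun p => ‖D p‖) ((Y ×ˢ (Set.univ : Set E3)) ∩ Metric.closedBall 0 R)
        volume)
    (hinf : ∀ R₁ R₂ : ℝ, 0 < R₁ → 0 < R₂ → ∃ c : ℝ, 0 < c ∧
      ∀ y ∈ Y, ‖y‖ ≤ R₁ → ∀ z : E3, ‖z‖ ≤ R₂ → c ≤ F (y, z))
    (hFz : ∀ R : ℝ, 0 < R →
      IntegrableOn (fun p => F p / ‖p.2‖)
        ((Y ×ˢ (Set.univ : Set E3)) ∩ Metric.closedBall 0 R) volume)
    (hperp : ∀ᵐ p ∂(volume.restrict (Y ×ˢ (Set.univ : Set E3))), ⟪D p, p.2⟫ = 0)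
    (hweak : ∀ Ψ, TestC N Ψ →
      (∫ p in Y ×ˢ (Set.univ : Set E3), ⟪Ψ p, D p⟫) =
        -∫ p in Y ×ˢ (Set.univ : Set E3), F p * divPi N Ψ p.1 p.2) :
    ∀ Ψ, TestC N Ψ →
      (∫ p in Y ×ˢ (Set.univ : Set E3), ⟪Ψ p, (2 * Real.sqrt (F p))⁻¹ • D p⟫) =
        -∫ p in Y ×ˢ (Set.univ : Set E3), Real.sqrt (F p) * divPi N Ψ p.1 p.2 := by
  intro Ψ hΨ
  have h : HasWeakProjGrad_s19 Y F D := hasWeakProjGrad_of_forall_testC hDmeas hFloc hDloc hperp hweak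
  simpa only [divPi_eq_divProj] using (stmt19_general hY hFmeas hDmeas h hinf
    (fun _ => hasDerivAt_sqrt_of_pos) fun _ => exists_nnnorm_inv_two_mul_sqrt_le).integral_inner_eq
    Ψ (testC_iff_isTestField.1 hΨ)

end
end
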